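/- Assume N ≥ 1, σ > 0, and either (a) Nσ < 4 and m > 0 with E_min(m) < -m, or (b) Nσ = 4, 0 < m < k* = (σ+1)^{1/σ}B(N,σ)^{-1/σ}, and E_min(m) < -m. Then for any sequence (u_n) ⊂ H²(ℝ^N) satisfying ‖u_n‖_{L²}² → m and E(u_n) → E_min(m), there exist a subsequence (still denoted u_n), a sequence of points (x_n) ⊂ ℝ^N, and a function u ∈ H²(ℝ^N) such that u_n(·+x_n) → u strongly in H²(ℝ^N). In particular, there exists u ∈ H²(ℝ^N) with ‖u‖_{L²}² = m and E(u) = E_min(m). -/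

import Mathlib

open MeasureTheory Filter Topology

noncomputable section

abbrev Esp (N : ℕ) := EuclideanSpace ℝ (Fin N)

/-- Smooth compactly supported test functions. -/
def TestFun {N : ℕ} (φ : Esp N → ℂ) : Prop :=
  ContDiff ℝ (⊤ : ℕ∞) φ ∧ HasCompactSupport φ

/-- Partial derivative in the `i`-th coordinate direction. -/
def pderivC {N : ℕ} (i : Fin N) (φ : Esp N → ℂ) : Esp N → ℂ :=
  fun x => fderiv ℝ φ x (EuclideanSpace.single i (1 : ℝ))

/-- The Laplacian of a (smooth) function. -/
def lapC {N : ℕ} (φ : Esp N → ℂ) : Esp N → ℂ :=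
  fun x => ∑ i, pderivC i (pderivC i φ) x

/-- `v` is the weak `i`-th partial derivative of `u`. -/
def IsWeakPDeriv {N : ℕ} (u : Esp N → ℂ) (i : Fin N) (v : Esp N → ℂ) : Prop :=
  ∀ φ : Esp N → ℂ, TestFun φ → ∫ x, u x * pderivC i φ x = - ∫ x, v x * φ x

/-- `v` is the weak Laplacian of `u`. -/
def IsWeakLap {N : ℕ} (u v : Esp N → ℂ) : Prop :=
  ∀ φ : Esp N → ℂ, TestFun φ → ∫ x, u x * lapC φ x = ∫ x, v x * φ x

/-- An element of the Sobolev space `H²(ℝ^N, ℂ)`: an `L²` function together with its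
weak partial derivatives and its weak Laplacian, all in `L²`. -/
structure H2 (N : ℕ) where
  u : Esp N → ℂ
  grad : Fin N → Esp N → ℂ
  lapl : Esp N → ℂ
  u_mem : MemLp u 2 (volume : Measure (Esp N))
  grad_mem : ∀ i, MemLp (grad i) 2 (volume : Measure (Esp N))
  lapl_mem : MemLp lapl 2 (volume : Measure (Esp N))
  grad_spec : ∀ i, IsWeakPDeriv u i (grad i)
  lapl_spec : IsWeakLap u lapl

namespace H2

variable {N : ℕ}

/-- `∫ |u|²`. -/
def massSq (U : H2 N) : ℝ := ∫ x, ‖U.u x‖ ^ 2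

/-- `∫ |∇u|²`. -/
def gradSq (U : H2 N) : ℝ := ∑ i, ∫ x, ‖U.grad i x‖ ^ 2

/-- `∫ |Δu|²`. -/
def lapSq (U : H2 N) : ℝ := ∫ x, ‖U.lapl x‖ ^ 2

/-- `∫ |u|^{2σ+2}`. -/
def pPow (σ : ℝ) (U : H2 N) : ℝ := ∫ x, ‖U.u x‖ ^ (2 * σ + 2)

/-- The energy `E(u) = ∫|Δu|² - 2∫|∇u|² - (1/(σ+1))∫|u|^{2σ+2}`. -/
def energy (σ : ℝ) (U : H2 N) : ℝ :=
  U.lapSq - 2 * U.gradSq - (1 / (σ + 1)) * U.pPow σ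

/-- The square of the `H²` norm. -/
def h2NormSq (U : H2 N) : ℝ := U.massSq + U.gradSq + U.lapSq

/-- `u` does not vanish almost everywhere. -/
def Nontriv (U : H2 N) : Prop := ¬ (U.u =ᵐ[(volume : Measure (Esp N))] 0)

end H2

/-- `E_min(m) = inf {E(u) : u ∈ H², ∫|u|² = m}`, with values in `EReal`. -/
def EminE (N : ℕ) (σ m : ℝ) : EReal :=
  ⨅ (U : H2 N) (_ : U.massSq = m), ((U.energy σ : ℝ) : EReal)

/-- The `L^p` norm (as a real number) of a function on `ℝ^N`. -/
def rLp {N : ℕ} (p : ℝ) (f : Esp N → ℂ) : ℝ :=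
  (eLpNorm f (ENNReal.ofReal p) (volume : Measure (Esp N))).toReal


/-- The best constant `B(N,σ)` in the Gagliardo–Nirenberg–Sobolev inequality
`‖u‖_{L^{2σ+2}}^{2σ+2} ≤ B ‖Δu‖_{L²}^{Nσ/2} ‖u‖_{L²}^{2+2σ-Nσ/2}`. -/
def GNconst (N : ℕ) (σ : ℝ) : ℝ :=
  sSup {r : ℝ | ∃ U : H2 N, U.Nontriv ∧
    r = U.pPow σ /
      (rLp 2 U.lapl ^ ((N : ℝ) * σ / 2) * rLp 2 U.u ^ (2 + 2 * σ - (N : ℝ) * σ / 2))}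

/-- `k* = (σ+1)^{1/σ} B(N,σ)^{-1/σ}`. -/
def kstar (N : ℕ) (σ : ℝ) : ℝ := (σ + 1) ^ (1 / σ) * GNconst N σ ^ (-(1 / σ))

/-- Strong `H²` convergence of `v k (· + xs k)` to `U`. -/
def H2TendstoTrans {N : ℕ} (v : ℕ → H2 N) (xs : ℕ → Esp N) (U : H2 N) : Prop :=
  Tendsto (fun k => eLpNorm (fun x => (v k).u (x + xs k) - U.u x) 2
      (volume : Measure (Esp N))) atTop (nhds 0) ∧
  (∀ i, Tendsto (fun k => eLpNorm (fun x => (v k).grad i (x + xs k) - U.grad i x) 2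
      (volume : Measure (Esp N))) atTop (nhds 0)) ∧
  Tendsto (fun k => eLpNorm (fun x => (v k).lapl (x + xs k) - U.lapl x) 2
      (volume : Measure (Esp N))) atTop (nhds 0)

/-- `u` is a weak (`H^{-2}`) solution of `Δ²u + 2Δu + (1+c)u - |u|^{2σ}u = 0`. -/
def SolvesSW {N : ℕ} (σ c : ℝ) (U : H2 N) : Prop :=
  ∀ φ : Esp N → ℂ, TestFun φ →
    (∫ x, U.lapl x * lapC φ x) + 2 * (∫ x, U.lapl x * φ x) +
        ((1 + c : ℝ) : ℂ) * (∫ x, U.u x * φ x) -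
        (∫ x, ((‖U.u x‖ ^ (2 * σ) : ℝ) : ℂ) * U.u x * φ x) = 0

/-- `T_c(u) = ∫|Δu|² - 2∫|∇u|² + (1+c)∫|u|²`. -/
def Tfun {N : ℕ} (c : ℝ) (U : H2 N) : ℝ := U.lapSq - 2 * U.gradSq + (1 + c) * U.massSq

/-- `t(c) = inf {T_c(u) : ∫|u|^{2σ+2} = 1}`. -/
def tmin (N : ℕ) (σ c : ℝ) : ℝ := sInf {r : ℝ | ∃ U : H2 N, U.pPow σ = 1 ∧ r = Tfun c U}

/-- The action `S_c(u) = E(u) + (1+c)‖u‖_{L²}² = T_c(u) - (1/(σ+1))∫|u|^{2σ+2}`. -/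
def action {N : ℕ} (σ c : ℝ) (U : H2 N) : ℝ := U.energy σ + (1 + c) * U.massSq

/-!
In Fourier variables, below an arbitrary frequency threshold an `H²` function with `L²` and `Δ`
bounds is smooth and above it is small in `L^{2σ+2}`. A lower bound on `∫ |u|^{2σ+2}` therefore
produces a point where the low-frequency part is bounded below. Along a minimizing sequence such a
bound follows from `E_min(m) < -m`, because `∫ |Δu|² - 2 ∫ |∇u|² + ∫ |u|² ≥ 0`. Translating these
points to the origin yields a nonzero weak limit `W`.

The quadratic terms of the energy split along weak convergence, and `∫ |u|^{2σ+2}` splits by the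
Brezis–Lieb lemma, so `E(u_n) - E(u_n - W) → E(W)`. Multiplying a function of mass `μ < m` by
`√(m / μ)` shows that its energy exceeds `(μ / m) E_min(m)` strictly. If the mass of `W` were below
`m`, this bound for `W` and for `u_n - W` would contradict the splitting. Hence the mass of
`u_n - W` tends to `0`, then so do `∫ |∇(u_n - W)|²` and `∫ |u_n - W|^{2σ+2}` by interpolation,
and finally `∫ |Δ(u_n - W)|²` by minimality.
-/

open FourierTransform LineDeriv
open scoped SchwartzMap ENNReal NNReal InnerProductSpace

/-! ### Weak divergences and the Fourier transform -/

section Cutoff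

variable {V : Type*} [NormedAddCommGroup V] [InnerProductSpace ℝ V] [FiniteDimensional ℝ V]

/-- The smooth cutoff at scale `n + 1`: equal to `1` on the ball of that radius and supported in
the ball of twice that radius. -/
def cutoff (n : ℕ) (x : V) : ℂ :=
  ((⟨1, 2, one_pos, one_lt_two⟩ : ContDiffBump (0 : V)) ((n + 1 : ℝ)⁻¹ • x) : ℝ)

lemma contDiff_cutoff (n : ℕ) : ContDiff ℝ (⊤ : ℕ∞) (cutoff n : V → ℂ) :=
  Complex.ofRealCLM.contDiff.comp ((ContDiffBump.contDiff _).comp (contDiff_const_smul _))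

lemma hasCompactSupport_cutoff (n : ℕ) : HasCompactSupport (cutoff n : V → ℂ) :=
  HasCompactSupport.comp_left (g := Complex.ofReal)
    ((ContDiffBump.hasCompactSupport _).comp_smul (by positivity)) Complex.ofReal_zero

lemma norm_cutoff_le_one (n : ℕ) (x : V) : ‖cutoff n x‖ ≤ 1 := by
  rw [cutoff, Complex.norm_real, Real.norm_of_nonneg (ContDiffBump.nonneg _)]
  exact ContDiffBump.le_one _

lemma cutoff_eventuallyEq_one (x : V) :
    ∀ᶠ n : ℕ in atTop, (cutoff n : V → ℂ) =ᶠ[𝓝 x] fun _ => 1 := by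
  filter_upwards [eventually_ge_atTop ⌈‖x‖⌉₊] with n hn
  have hmem : (n + 1 : ℝ)⁻¹ • x ∈ Metric.ball (0 : V) 1 := by
    have hx : ‖x‖ ≤ n := Nat.ceil_le.1 hn
    rw [mem_ball_zero_iff, norm_smul, Real.norm_of_nonneg (by positivity),
      inv_mul_lt_iff₀ (by positivity)]
    linarith
  have hnear : ∀ᶠ y in 𝓝 x, (n + 1 : ℝ)⁻¹ • y ∈ Metric.ball (0 : V) 1 :=
    (continuous_const_smul _).continuousAt.eventually (Metric.isOpen_ball.mem_nhds hmem)
  filter_upwards [hnear] with y hy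
  rw [cutoff, ContDiffBump.one_of_mem_closedBall _ (Metric.ball_subset_closedBall hy),
    Complex.ofReal_one]

lemma exists_norm_fderiv_cutoff_le (V : Type*) [NormedAddCommGroup V] [InnerProductSpace ℝ V]
    [FiniteDimensional ℝ V] :
    ∃ C : ℝ, ∀ (n : ℕ) (x : V), ‖fderiv ℝ (cutoff n : V → ℂ) x‖ ≤ C := by
  have hcont : Continuous (fderiv ℝ (cutoff 0 : V → ℂ)) :=
    (contDiff_cutoff 0).continuous_fderiv (by simp)
  have hsupp : HasCompactSupport (fderiv ℝ (cutoff 0 : V → ℂ)) :=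
    (hasCompactSupport_cutoff 0).fderiv ℝ
  obtain ⟨C, hC⟩ := hsupp.exists_bound_of_continuous hcont
  refine ⟨C, fun n x => ?_⟩
  have hscale : (cutoff n : V → ℂ) = fun y => cutoff 0 ((n + 1 : ℝ)⁻¹ • y) := by
    ext y; simp [cutoff]
  rw [hscale, fderiv_comp_smul, norm_smul, Real.norm_of_nonneg (by positivity)]
  exact (mul_le_of_le_one_left (norm_nonneg _) (inv_le_one_of_one_le₀ (by simp))).trans (hC _)

lemma norm_fderiv_cutoff_mul_apply_le {C : ℝ}
    (hC : ∀ (n : ℕ) (x : V), ‖fderiv ℝ (cutoff n : V → ℂ) x‖ ≤ C)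
    (φ : 𝓢(V, ℂ)) (n : ℕ) (x e : V) :
    ‖fderiv ℝ (fun y => cutoff n y * φ y) x e‖ ≤ ‖fderiv ℝ φ x e‖ + C * ‖e‖ * ‖φ x‖ := by
  have hcut : DifferentiableAt ℝ (cutoff n : V → ℂ) x :=
    (contDiff_cutoff n).differentiable (by simp) x
  rw [fderiv_fun_mul hcut φ.differentiableAt]
  calc ‖cutoff n x * fderiv ℝ φ x e + φ x * fderiv ℝ (cutoff n) x e‖
      ≤ ‖cutoff n x‖ * ‖fderiv ℝ φ x e‖ + ‖φ x‖ * ‖fderiv ℝ (cutoff n) x e‖ := by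
        simpa only [norm_mul] using
          norm_add_le (cutoff n x * fderiv ℝ φ x e) (φ x * fderiv ℝ (cutoff n) x e)
    _ ≤ 1 * ‖fderiv ℝ φ x e‖ + ‖φ x‖ * (C * ‖e‖) := by
        gcongr
        · exact norm_cutoff_le_one n x
        · exact (fderiv ℝ (cutoff n) x).le_of_opNorm_le (hC n x) e
    _ = ‖fderiv ℝ φ x e‖ + C * ‖e‖ * ‖φ x‖ := by ring

variable [MeasurableSpace V] [BorelSpace V] {v : V → ℂ}

lemma tendsto_integral_mul_cutoff_mul (hv : MemLp v 2) (φ : 𝓢(V, ℂ)) :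
    Tendsto (fun n => ∫ x, v x * (cutoff n x * φ x)) atTop (𝓝 (∫ x, v x * φ x)) := by
  refine tendsto_integral_of_dominated_convergence (fun x => ‖v x * φ x‖) (fun n => ?_)
    (hv.integrable_mul (φ.memLp 2 volume)).norm (fun n => ae_of_all _ fun x => ?_)
    (ae_of_all _ fun x => ?_)
  · exact hv.1.mul ((contDiff_cutoff n).continuous.mul φ.continuous).aestronglyMeasurable
  · simp only [norm_mul]
    gcongr
    exact mul_le_of_le_one_left (norm_nonneg _) (norm_cutoff_le_one n x)
  · refine tendsto_const_nhds.congr' ?_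
    filter_upwards [cutoff_eventuallyEq_one x] with n hn
    rw [hn.self_of_nhds, one_mul]

lemma tendsto_integral_mul_fderiv_cutoff_mul (hv : MemLp v 2) (φ : 𝓢(V, ℂ)) (e : V) :
    Tendsto (fun n => ∫ x, v x * fderiv ℝ (fun y => cutoff n y * φ y) x e) atTop
      (𝓝 (∫ x, v x * fderiv ℝ φ x e)) := by
  obtain ⟨C, hC⟩ := exists_norm_fderiv_cutoff_le V
  have hderiv : MemLp (fun x => fderiv ℝ φ x e) 2 :=
    (∂_{e} φ : 𝓢(V, ℂ)).memLp 2 volume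
  refine tendsto_integral_of_dominated_convergence
    (fun x => ‖v x * fderiv ℝ φ x e‖ + C * ‖e‖ * ‖v x * φ x‖) (fun n => ?_)
    ((hv.integrable_mul hderiv).norm.add
      ((hv.integrable_mul (φ.memLp 2 volume)).norm.const_mul _))
    (fun n => ae_of_all _ fun x => ?_) (ae_of_all _ fun x => ?_)
  · have hprod : ContDiff ℝ (⊤ : ℕ∞) fun y => cutoff n y * φ y :=
      (contDiff_cutoff n).mul (φ.smooth ⊤)
    exact hv.1.mul
      ((hprod.continuous_fderiv (by simp)).clm_apply continuous_const).aestronglyMeasurable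
  · calc ‖v x * fderiv ℝ (fun y => cutoff n y * φ y) x e‖
        ≤ ‖v x‖ * (‖fderiv ℝ φ x e‖ + C * ‖e‖ * ‖φ x‖) := by
          rw [norm_mul]
          gcongr
          exact norm_fderiv_cutoff_mul_apply_le hC φ n x e
      _ = ‖v x * fderiv ℝ φ x e‖ + C * ‖e‖ * ‖v x * φ x‖ := by
          simp only [norm_mul]; ring
  · refine tendsto_const_nhds.congr' ?_
    filter_upwards [cutoff_eventuallyEq_one x] with n hn
    have hnear : (fun y => cutoff n y * φ y) =ᶠ[𝓝 x] φ := hn.mono fun y hy => by simp [hy]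
    rw [hnear.fderiv_eq]

end Cutoff

/-- The Hilbert space of complex-valued square-integrable functions on `V`. -/
abbrev L2Space (V : Type*) [NormedAddCommGroup V] [InnerProductSpace ℝ V] [FiniteDimensional ℝ V]
    [MeasurableSpace V] [BorelSpace V] :=
  Lp (α := V) ℂ 2 volume

lemma locallyIntegrable_continuous_mul {V : Type*} [NormedAddCommGroup V] [InnerProductSpace ℝ V]
    [FiniteDimensional ℝ V] [MeasurableSpace V] [BorelSpace V] {a : V → ℂ} (ha : Continuous a)
    (f : L2Space V) : LocallyIntegrable fun ξ => a ξ * f ξ := by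
  have hf : LocallyIntegrable f := (Lp.memLp f).locallyIntegrable one_le_two
  rw [← locallyIntegrableOn_univ] at hf ⊢
  exact hf.continuousOn_mul ha.continuousOn isOpen_univ.isLocallyClosed

section WeakDivergence

variable {N : ℕ} {f : Fin N → L2Space (Esp N)} {g : L2Space (Esp N)}

/-- `g` is the weak divergence of the square-integrable vector field `f`. Both weak partial
derivatives and weak Laplacians are weak divergences: of a field with a single nonzero component,
and of the gradient. -/
def IsWeakDiv (f : Fin N → L2Space (Esp N)) (g : L2Space (Esp N)) : Prop :=
  ∀ φ : Esp N → ℂ, TestFun φ → ∑ i, ∫ x, f i x * pderivC i φ x = -∫ x, g x * φ x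

lemma IsWeakDiv.apply_schwartzMap (h : IsWeakDiv f g) (φ : 𝓢(Esp N, ℂ)) :
    ∑ i, ∫ x, f i x * pderivC i φ x = -∫ x, g x * φ x := by
  have htest (n : ℕ) : TestFun fun x => cutoff n x * φ x :=
    ⟨(contDiff_cutoff n).mul (φ.smooth ⊤), (hasCompactSupport_cutoff n).mul_right⟩
  have hdiv : Tendsto (fun n => ∑ i, ∫ x, f i x * pderivC i (fun y => cutoff n y * φ y) x) atTop
      (𝓝 (∑ i, ∫ x, f i x * pderivC i φ x)) :=
    tendsto_finsetSum _ fun i _ => tendsto_integral_mul_fderiv_cutoff_mul (Lp.memLp (f i)) φ _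
  exact tendsto_nhds_unique hdiv <|
    (tendsto_integral_mul_cutoff_mul (Lp.memLp g) φ).neg.congr fun n => (h _ (htest n)).symm

lemma IsWeakDiv.sum_lineDerivOp (h : IsWeakDiv f g) :
    ∑ i, ∂_{EuclideanSpace.single i (1 : ℝ)} (f i : 𝓢'(Esp N, ℂ)) = (g : 𝓢'(Esp N, ℂ)) := by
  ext φ
  have hφ := h.apply_schwartzMap φ
  simp only [sum_apply, TemperedDistribution.lineDerivOp_apply_apply, map_neg,
    Lp.toTemperedDistribution_apply, smul_eq_mul, Finset.sum_neg_distrib,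
    SchwartzMap.lineDerivOp_apply_eq_fderiv]
  rw [neg_eq_iff_eq_neg]
  simpa only [mul_comm, pderivC] using hφ

lemma smulLeftCLM_inner_single_apply (φ : 𝓢(Esp N, ℂ)) (i : Fin N) (x : Esp N) :
    SchwartzMap.smulLeftCLM ℂ
      (fun y : Esp N => ((inner ℝ y (EuclideanSpace.single i (1 : ℝ)) : ℝ) : ℂ)) φ x
      = x i * φ x := by
  rw [SchwartzMap.smulLeftCLM_apply_apply (by fun_prop)]
  simp [EuclideanSpace.inner_single_right]

lemma IsWeakDiv.fourier_ae_eq (h : IsWeakDiv f g) :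
    (𝓕 g : L2Space (Esp N)) =ᵐ[volume]
      fun ξ => ∑ i, (2 * Real.pi * Complex.I) * ξ i * (𝓕 (f i) : L2Space (Esp N)) ξ := by
  have hloc (i : Fin N) : LocallyIntegrable (fun ξ : Esp N =>
      (2 * Real.pi * Complex.I) * ξ i * (𝓕 (f i) : L2Space (Esp N)) ξ) :=
    locallyIntegrable_continuous_mul (by fun_prop) _
  refine ae_eq_of_integral_contDiff_smul_eq ((Lp.memLp _).locallyIntegrable one_le_two)
    (locallyIntegrable_finsetSum _ fun i _ => hloc i) fun φ hφ hφc => ?_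
  let ψ : 𝓢(Esp N, ℂ) := HasCompactSupport.toSchwartzMap (f := fun x => (φ x : ℂ))
    (hφc.comp_left Complex.ofReal_zero) (Complex.ofRealCLM.contDiff.comp hφ)
  have hψ (x : Esp N) : ψ x = φ x := rfl
  have hfourier := congrArg (fun T : 𝓢'(Esp N, ℂ) => (𝓕 T) ψ) h.sum_lineDerivOp
  simp only [FourierTransform.fourier_sum, TemperedDistribution.fourier_lineDerivOp_eq,
    Lp.fourier_toTemperedDistribution_eq, sum_apply, smul_apply,
    TemperedDistribution.smulLeftCLM_apply_apply, Lp.toTemperedDistribution_apply] at hfourier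
  calc ∫ x, φ x • (𝓕 g : L2Space (Esp N)) x
      = ∑ i, (2 * Real.pi * Complex.I) * ∫ x, x i * ψ x * (𝓕 (f i) : L2Space (Esp N)) x := by
        simpa only [smulLeftCLM_inner_single_apply, smul_eq_mul, hψ, Complex.real_smul]
          using hfourier.symm
    _ = ∑ i, ∫ x, φ x • ((2 * Real.pi * Complex.I) * x i * (𝓕 (f i) : L2Space (Esp N)) x) := by
        refine Finset.sum_congr rfl fun i _ => ?_
        rw [← integral_const_mul]
        refine integral_congr_ae (ae_of_all _ fun x => ?_)
        simp only [hψ, Complex.real_smul]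
        ring
    _ = _ := by
        simp only [Finset.smul_sum]
        exact (integral_finsetSum _ fun i _ =>
          (hloc i).integrable_smul_left_of_hasCompactSupport hφ.continuous hφc).symm

end WeakDivergence

/-! ### Square-integrable functions -/

section L2Norm

variable {α E : Type*} {mα : MeasurableSpace α} {μ : Measure α} [NormedAddCommGroup E]

lemma norm_sq_eq_integral_norm_sq [InnerProductSpace ℂ E] (f : Lp E 2 μ) :
    ‖f‖ ^ 2 = ∫ x, ‖f x‖ ^ 2 ∂μ := by
  rw [@norm_sq_eq_re_inner ℂ, L2.inner_def, ← integral_re (L2.integrable_inner f f)]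
  simp only [inner_self_eq_norm_sq]

lemma ofReal_norm_sq_eq_lintegral [InnerProductSpace ℂ E] (f : Lp E 2 μ) :
    ENNReal.ofReal (‖f‖ ^ 2) = ∫⁻ x, ENNReal.ofReal (‖f x‖ ^ 2) ∂μ := by
  rw [norm_sq_eq_integral_norm_sq, ofReal_integral_eq_lintegral_ofReal
    ((memLp_two_iff_integrable_sq_norm (Lp.memLp f).1).1 (Lp.memLp f))
    (ae_of_all _ fun x => by positivity)]

end L2Norm

section Translation

variable {V : Type*} [NormedAddCommGroup V] [InnerProductSpace ℝ V] [FiniteDimensional ℝ V]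
  [MeasurableSpace V] [BorelSpace V]

/-- The translation `f ↦ f (· + a)` of square-integrable functions, as a linear isometry. -/
def translateL2 (a : V) : L2Space V →ₗᵢ[ℂ] L2Space V :=
  Lp.compMeasurePreservingₗᵢ ℂ (· + a) (measurePreserving_add_right volume a)

lemma coeFn_translateL2 (a : V) (f : L2Space V) : translateL2 a f =ᵐ[volume] fun x => f (x + a) :=
  Lp.coeFn_compMeasurePreserving f (measurePreserving_add_right volume a)

lemma translateL2_toLp (a : V) (φ : 𝓢(V, ℂ)) :
    translateL2 a (φ.toLp 2) = (φ.compSubConstCLM ℂ (-a)).toLp 2 := by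
  refine Lp.ext ((coeFn_translateL2 a _).trans ?_)
  have hφ : ∀ᵐ x : V, φ.toLp 2 volume (x + a) = φ (x + a) :=
    (measurePreserving_add_right volume a).quasiMeasurePreserving.ae (φ.coeFn_toLp 2 volume)
  filter_upwards [hφ, (φ.compSubConstCLM ℂ (-a)).coeFn_toLp 2 volume] with x hx hx'
  rw [hx, hx', SchwartzMap.compSubConstCLM_apply, sub_neg_eq_add]

end Translation

/-! ### Frequency truncation -/

section FrequencyTruncation

variable {V : Type*} [NormedAddCommGroup V] [InnerProductSpace ℝ V]

/-- The plane wave `ξ ↦ e^{-2πi⟨ξ, x⟩}` truncated to the ball of radius `A`. -/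
def truncatedWave (A : ℝ) (x : V) : V → ℂ :=
  (Metric.ball (0 : V) A).indicator fun ξ => (Real.fourierChar (-inner ℝ ξ x) : ℂ)

lemma norm_truncatedWave (A : ℝ) (x ξ : V) :
    ‖truncatedWave A x ξ‖ = (Metric.ball (0 : V) A).indicator (fun _ => (1 : ℝ)) ξ := by
  simp only [truncatedWave, norm_indicator_eq_indicator_norm, Circle.norm_coe]

variable [FiniteDimensional ℝ V] [MeasurableSpace V] [BorelSpace V]

lemma integral_mul_fourierInv (f : L2Space V) (φ : 𝓢(V, ℂ)) :
    ∫ x, φ x * (𝓕⁻ f : L2Space V) x = ∫ x, 𝓕⁻ φ x * f x := by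
  have h := congrArg (fun T : 𝓢'(V, ℂ) => T φ) (Lp.fourierInv_toTemperedDistribution_eq f)
  simpa only [TemperedDistribution.fourierInv_apply, Lp.toTemperedDistribution_apply,
    smul_eq_mul] using h.symm

lemma integral_fourierInv_mul {φ g : V → ℂ} (hφ : Integrable φ) (hg : Integrable g) :
    ∫ x, 𝓕⁻ φ x * g x = ∫ ξ, φ ξ * 𝓕⁻ g ξ := by
  have hflip : (-innerₗ V).flip = -innerₗ V := by
    ext x y
    simp [real_inner_comm]
  have hswap := VectorFourier.integral_fourierIntegral_smul_eq_flip (μ := (volume : Measure V))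
    (ν := (volume : Measure V)) (e := Real.fourierChar) (L := -innerₗ V)
    Real.continuous_fourierChar
    (by simp only [LinearMap.neg_apply, innerₗ_apply_apply]; fun_prop) hφ hg
  rwa [hflip] at hswap

lemma continuous_fourierInv {g : V → ℂ} (hg : Integrable g) : Continuous (𝓕⁻ g) :=
  VectorFourier.fourierIntegral_continuous (L := -innerₗ V) Real.continuous_fourierChar
    (by simp only [LinearMap.neg_apply, innerₗ_apply_apply]; fun_prop) hg

lemma fourierInv_toLp_ae_eq {g : V → ℂ} (hg : Integrable g) (hg' : MemLp g 2) :
    (𝓕⁻ (hg'.toLp g) : L2Space V) =ᵐ[volume] 𝓕⁻ g := by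
  refine ae_eq_of_integral_contDiff_smul_eq ((Lp.memLp _).locallyIntegrable one_le_two)
    (continuous_fourierInv hg).locallyIntegrable fun φ hφ hφc => ?_
  let ψ : 𝓢(V, ℂ) := HasCompactSupport.toSchwartzMap (f := fun x => (φ x : ℂ))
    (hφc.comp_left Complex.ofReal_zero) (Complex.ofRealCLM.contDiff.comp hφ)
  have hψ (x : V) : ψ x = φ x := rfl
  simp only [Complex.real_smul, ← hψ]
  rw [integral_mul_fourierInv, ← integral_fourierInv_mul ψ.integrable hg]
  refine integral_congr_ae ?_
  filter_upwards [hg'.coeFn_toLp] with x hx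
  rw [hx, SchwartzMap.fourierInv_coe]

lemma memLp_truncatedWave (A : ℝ) (x : V) : MemLp (truncatedWave A x) 2 := by
  have hball : MemLp ((Metric.ball (0 : V) A).indicator fun _ => (1 : ℝ)) 2 :=
    memLp_indicator_const 2 measurableSet_ball 1 (Or.inr measure_ball_lt_top.ne)
  have hcont : Continuous fun ξ : V => (Real.fourierChar (-inner ℝ ξ x) : ℂ) :=
    continuous_subtype_val.comp (Real.continuous_fourierChar.comp (by fun_prop))
  refine hball.of_le (hcont.aestronglyMeasurable.indicator measurableSet_ball)
    (ae_of_all _ fun ξ => ?_)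
  rw [norm_truncatedWave]
  exact le_abs_self _

/-- The value at `x` of the part of `f` carried by the frequencies `|ξ| < A`. Since this part has
an integrable Fourier transform, it is defined at every point. -/
def lowFreq (A : ℝ) (f : L2Space V) (x : V) : ℂ :=
  inner ℂ ((memLp_truncatedWave A x).toLp _ : L2Space V) (𝓕 f)

lemma norm_lowFreq_le (A : ℝ) (f : L2Space V) (x : V) :
    ‖lowFreq A f x‖ ≤ √(volume.real (Metric.ball (0 : V) A)) * ‖f‖ := by
  have hwave : ‖(memLp_truncatedWave A x).toLp _‖ ^ 2 = volume.real (Metric.ball (0 : V) A) := by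
    rw [norm_sq_eq_integral_norm_sq, integral_congr_ae
      (g := (Metric.ball (0 : V) A).indicator 1),
      integral_indicator_one measurableSet_ball]
    filter_upwards [(memLp_truncatedWave A x).coeFn_toLp] with ξ hξ
    rw [hξ, norm_truncatedWave]
    by_cases h : ξ ∈ Metric.ball (0 : V) A <;> simp [h]
  rw [← hwave, Real.sqrt_sq (norm_nonneg _), ← Lp.norm_fourier_eq f]
  exact norm_inner_le_norm _ _

lemma lowFreq_eq_integral (A : ℝ) (f : L2Space V) (x : V) :
    lowFreq A f x = ∫ ξ in Metric.ball (0 : V) A,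
      Real.fourierChar (inner ℝ ξ x) • (𝓕 f : L2Space V) ξ := by
  rw [lowFreq, L2.inner_def, ← integral_indicator measurableSet_ball]
  refine integral_congr_ae ?_
  filter_upwards [(memLp_truncatedWave A x).coeFn_toLp] with ξ hξ
  rw [hξ, truncatedWave]
  by_cases h : ξ ∈ Metric.ball (0 : V) A
  · rw [Set.indicator_of_mem h, Set.indicator_of_mem h, Circle.smul_def, RCLike.inner_apply,
      AddChar.map_neg_eq_inv, Circle.coe_inv_eq_conj, RCLike.conj_conj, smul_eq_mul, mul_comm]
  · simp [h]

lemma lowFreq_toLp (A : ℝ) (φ : 𝓢(V, ℂ)) (x : V) :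
    lowFreq A (φ.toLp 2) x = ∫ ξ in Metric.ball (0 : V) A,
      Real.fourierChar (inner ℝ ξ x) • 𝓕 φ ξ := by
  rw [lowFreq_eq_integral, SchwartzMap.toLp_fourier_eq]
  refine integral_congr_ae (ae_restrict_of_ae ?_)
  filter_upwards [(𝓕 φ).coeFn_toLp 2 volume] with ξ hξ
  rw [hξ]

lemma fourier_compSubConstCLM (φ : 𝓢(V, ℂ)) (a ξ : V) :
    𝓕 (φ.compSubConstCLM ℂ (-a)) ξ = Real.fourierChar (inner ℝ a ξ) • 𝓕 φ ξ := by
  have h := congrFun (VectorFourier.fourierIntegral_comp_add_right Real.fourierChar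
    (volume : Measure V) (innerₗ V) φ a) ξ
  simpa only [SchwartzMap.fourier_coe, Real.fourier_eq, VectorFourier.fourierIntegral,
    SchwartzMap.compSubConstCLM_apply, sub_neg_eq_add, innerₗ_apply_apply, Function.comp_apply]
    using h

lemma lowFreq_translateL2 (A : ℝ) (a : V) (f : L2Space V) (x : V) :
    lowFreq A (translateL2 a f) x = lowFreq A f (x + a) := by
  refine DenseRange.induction_on (SchwartzMap.denseRange_toLpCLM (p := 2) ENNReal.ofNat_ne_top) f
    (isClosed_eq ?_ ?_) fun φ => ?_
  · exact continuous_const.inner ((Lp.fourierTransformₗᵢ V ℂ).continuous.comp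
      (translateL2 a).continuous)
  · exact continuous_const.inner (Lp.fourierTransformₗᵢ V ℂ).continuous
  · rw [SchwartzMap.toLpCLM_apply, translateL2_toLp, lowFreq_toLp, lowFreq_toLp]
    simp only [fourier_compSubConstCLM, inner_add_right, AddChar.map_add_eq_mul, mul_smul,
      real_inner_comm]

/-- The part of `f` carried by the frequencies `|ξ| ≥ A`. -/
def highFreq (A : ℝ) (f : L2Space V) : L2Space V :=
  𝓕⁻ (((Lp.memLp (𝓕 f : L2Space V)).indicator measurableSet_ball.compl).toLp
    ((Metric.ball (0 : V) A)ᶜ.indicator (𝓕 f : L2Space V)))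

lemma fourier_highFreq (A : ℝ) (f : L2Space V) :
    (𝓕 (highFreq A f) : L2Space V) =ᵐ[volume]
      (Metric.ball (0 : V) A)ᶜ.indicator (𝓕 f : L2Space V) := by
  rw [highFreq, fourier_fourierInv_eq]
  exact MemLp.coeFn_toLp _

lemma lowFreq_add_highFreq (A : ℝ) (f : L2Space V) :
    f =ᵐ[volume] fun x => lowFreq A f x + highFreq A f x := by
  have hfin : IsFiniteMeasure ((volume : Measure V).restrict (Metric.ball 0 A)) :=
    isFiniteMeasure_restrict.2 measure_ball_lt_top.ne
  have hmem : MemLp ((Metric.ball (0 : V) A).indicator (𝓕 f : L2Space V)) 2 :=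
    (Lp.memLp _).indicator measurableSet_ball
  have hint : Integrable ((Metric.ball (0 : V) A).indicator (𝓕 f : L2Space V)) :=
    (integrable_indicator_iff measurableSet_ball).2
      (((Lp.memLp (𝓕 f : L2Space V)).restrict _).integrable one_le_two)
  have hsplit : f = 𝓕⁻ (hmem.toLp _) + highFreq A f := by
    rw [highFreq, ← fourierInv_add, ← MemLp.toLp_add]
    simp only [Set.indicator_self_add_compl, Lp.toLp_coeFn, fourierInv_fourier_eq]
  have hlow (x : V) : 𝓕⁻ ((Metric.ball (0 : V) A).indicator (𝓕 f : L2Space V)) x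
      = lowFreq A f x := by
    rw [lowFreq_eq_integral, Real.fourierInv_eq, ← integral_indicator measurableSet_ball]
    simp only [Set.indicator_smul]
  filter_upwards [fourierInv_toLp_ae_eq hint hmem,
    Lp.coeFn_add (𝓕⁻ (hmem.toLp _)) (highFreq A f)] with x hx hadd
  rw [← hlow, ← hx]
  nth_rw 1 [hsplit]
  exact hadd

end FrequencyTruncation

/-! ### Operations on `H²` functions -/

section TestFunctions

variable {N : ℕ} {φ : Esp N → ℂ}

lemma TestFun.memLp (hφ : TestFun φ) : MemLp φ 2 :=
  hφ.1.continuous.memLp_of_hasCompactSupport hφ.2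

lemma TestFun.pderivC (hφ : TestFun φ) (i : Fin N) : TestFun (pderivC i φ) :=
  ⟨(hφ.1.fderiv_right (m := (⊤ : ℕ∞)) (by simp)).clm_apply contDiff_const,
    hφ.2.fderiv_apply ℝ _⟩

lemma TestFun.comp_sub_right (hφ : TestFun φ) (a : Esp N) : TestFun fun x => φ (x - a) :=
  ⟨hφ.1.comp (contDiff_id.sub contDiff_const), hφ.2.comp_homeomorph (Homeomorph.subRight a)⟩

lemma pderivC_comp_sub_right (φ : Esp N → ℂ) (a : Esp N) (i : Fin N) (x : Esp N) :
    pderivC i (fun y => φ (y - a)) x = pderivC i φ (x - a) := by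
  simp only [pderivC, fderiv_comp_sub]

end TestFunctions

section WeakDivergenceClosure

variable {N : ℕ} {f f' : Fin N → L2Space (Esp N)} {g g' : L2Space (Esp N)}

lemma integral_mul_eq_inner {V : Type*} [NormedAddCommGroup V] [InnerProductSpace ℝ V]
    [FiniteDimensional ℝ V] [MeasurableSpace V] [BorelSpace V] {φ : V → ℂ} (hφ : MemLp φ 2)
    (g : L2Space V) : ∫ x, g x * φ x = inner ℂ (hφ.star.toLp (star φ) : L2Space V) g := by
  rw [L2.inner_def]
  refine integral_congr_ae ?_
  filter_upwards [hφ.star.coeFn_toLp] with x hx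
  rw [hx, RCLike.inner_apply, Pi.star_apply, RCLike.star_def, RCLike.conj_conj]

lemma isWeakDiv_iff_inner : IsWeakDiv f g ↔ ∀ (φ : Esp N → ℂ) (hφ : TestFun φ),
    ∑ i, inner ℂ ((hφ.pderivC i).memLp.star.toLp _) (f i) = -inner ℂ (hφ.memLp.star.toLp _) g := by
  refine forall₂_congr fun φ hφ => ?_
  simp only [integral_mul_eq_inner hφ.memLp, integral_mul_eq_inner (hφ.pderivC _).memLp]

lemma IsWeakDiv.sub (h : IsWeakDiv f g) (h' : IsWeakDiv f' g') : IsWeakDiv (f - f') (g - g') := by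
  rw [isWeakDiv_iff_inner] at *
  intro φ hφ
  simp only [Pi.sub_apply, inner_sub_right, Finset.sum_sub_distrib, h φ hφ, h' φ hφ]
  ring

lemma IsWeakDiv.const_smul (h : IsWeakDiv f g) (c : ℂ) : IsWeakDiv (c • f) (c • g) := by
  rw [isWeakDiv_iff_inner] at *
  intro φ hφ
  simp only [Pi.smul_apply, inner_smul_right, ← Finset.mul_sum, h φ hφ, mul_neg]

lemma isWeakDiv_of_tendsto_inner {F : ℕ → Fin N → L2Space (Esp N)} {G : ℕ → L2Space (Esp N)}
    (h : ∀ n, IsWeakDiv (F n) (G n))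
    (hF : ∀ i a, Tendsto (fun n => inner ℂ a (F n i)) atTop (𝓝 (inner ℂ a (f i))))
    (hG : ∀ a, Tendsto (fun n => inner ℂ a (G n)) atTop (𝓝 (inner ℂ a g))) : IsWeakDiv f g := by
  rw [isWeakDiv_iff_inner]
  intro φ hφ
  exact tendsto_nhds_unique (tendsto_finsetSum _ fun i _ => hF i _)
    ((hG _).neg.congr fun n => (isWeakDiv_iff_inner.1 (h n) φ hφ).symm)

lemma integral_mul_congr_left {α : Type*} [MeasurableSpace α] {μ : Measure α} {u v : α → ℂ}
    (h : u =ᵐ[μ] v) (φ : α → ℂ) : ∫ x, u x * φ x ∂μ = ∫ x, v x * φ x ∂μ :=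
  integral_congr_ae (h.mul EventuallyEq.rfl)

lemma integral_translateL2_mul {V : Type*} [NormedAddCommGroup V] [InnerProductSpace ℝ V]
    [FiniteDimensional ℝ V] [MeasurableSpace V] [BorelSpace V] (a : V) (f : L2Space V)
    (φ : V → ℂ) : ∫ x, translateL2 a f x * φ x = ∫ x, f x * φ (x - a) := by
  rw [← integral_add_right_eq_self (fun x => f x * φ (x - a)) a]
  refine integral_congr_ae ?_
  filter_upwards [coeFn_translateL2 a f] with x hx
  rw [hx, add_sub_cancel_right]

lemma IsWeakDiv.translateL2 (h : IsWeakDiv f g) (a : Esp N) :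
    IsWeakDiv (fun i => translateL2 a (f i)) (translateL2 a g) := by
  intro φ hφ
  simp only [integral_translateL2_mul, ← pderivC_comp_sub_right φ a]
  exact h _ (hφ.comp_sub_right a)

lemma isWeakDiv_single_iff {i : Fin N} {u : L2Space (Esp N)} :
    IsWeakDiv (Pi.single i u) g ↔ IsWeakPDeriv u i g := by
  refine forall₂_congr fun φ hφ => ?_
  rw [Finset.sum_eq_single i, Pi.single_eq_same]
  · intro j _ hj
    rw [Pi.single_eq_of_ne hj, integral_mul_eq_inner (hφ.pderivC j).memLp, inner_zero_right]
  · simp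

lemma integral_mul_lapC {u : L2Space (Esp N)} (h : ∀ i, IsWeakPDeriv u i (f i))
    {φ : Esp N → ℂ} (hφ : TestFun φ) :
    ∫ x, u x * lapC φ x = -∑ i, ∫ x, f i x * pderivC i φ x := by
  have hint (i : Fin N) : Integrable fun x => u x * pderivC i (pderivC i φ) x :=
    (Lp.memLp u).integrable_mul ((hφ.pderivC i).pderivC i).memLp
  simp only [lapC, Finset.mul_sum]
  rw [integral_finsetSum _ fun i _ => hint i, ← Finset.sum_neg_distrib]
  exact Finset.sum_congr rfl fun i _ => h i _ (hφ.pderivC i)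

lemma isWeakLap_iff_isWeakDiv {u : L2Space (Esp N)} (h : ∀ i, IsWeakPDeriv u i (f i)) :
    IsWeakLap u g ↔ IsWeakDiv f g := by
  refine forall₂_congr fun φ hφ => ?_
  rw [integral_mul_lapC h hφ, neg_eq_iff_eq_neg]

end WeakDivergenceClosure

namespace H2

variable {N : ℕ} {σ : ℝ}

/-- The class in `L²` of an `H²` function. -/
def toL2 (U : H2 N) : L2Space (Esp N) := U.u_mem.toLp U.u

/-- The classes in `L²` of the partial derivatives of an `H²` function. -/
def gradL2 (U : H2 N) (i : Fin N) : L2Space (Esp N) := (U.grad_mem i).toLp (U.grad i)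

/-- The class in `L²` of the Laplacian of an `H²` function. -/
def laplL2 (U : H2 N) : L2Space (Esp N) := U.lapl_mem.toLp U.lapl

lemma coeFn_toL2 (U : H2 N) : U.toL2 =ᵐ[volume] U.u := U.u_mem.coeFn_toLp

lemma coeFn_gradL2 (U : H2 N) (i : Fin N) : U.gradL2 i =ᵐ[volume] U.grad i :=
  (U.grad_mem i).coeFn_toLp

lemma coeFn_laplL2 (U : H2 N) : U.laplL2 =ᵐ[volume] U.lapl := U.lapl_mem.coeFn_toLp

lemma isWeakPDeriv_gradL2 (U : H2 N) (i : Fin N) : IsWeakPDeriv U.toL2 i (U.gradL2 i) := by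
  intro φ hφ
  rw [integral_mul_congr_left U.coeFn_toL2, integral_mul_congr_left (U.coeFn_gradL2 i)]
  exact U.grad_spec i φ hφ

lemma isWeakDiv_gradL2 (U : H2 N) (i : Fin N) : IsWeakDiv (Pi.single i U.toL2) (U.gradL2 i) :=
  isWeakDiv_single_iff.2 (U.isWeakPDeriv_gradL2 i)

lemma isWeakDiv_laplL2 (U : H2 N) : IsWeakDiv U.gradL2 U.laplL2 := by
  refine (isWeakLap_iff_isWeakDiv U.isWeakPDeriv_gradL2).1 fun φ hφ => ?_
  rw [integral_mul_congr_left U.coeFn_toL2, integral_mul_congr_left U.coeFn_laplL2]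
  exact U.lapl_spec φ hφ

/-- The `H²` function with given classes in `L²` of the function, its partial derivatives and its
Laplacian. -/
def ofL2 (u : L2Space (Esp N)) (g : Fin N → L2Space (Esp N)) (l : L2Space (Esp N))
    (hg : ∀ i, IsWeakDiv (Pi.single i u) (g i)) (hl : IsWeakDiv g l) : H2 N where
  u := u
  grad i := g i
  lapl := l
  u_mem := Lp.memLp u
  grad_mem i := Lp.memLp (g i)
  lapl_mem := Lp.memLp l
  grad_spec i := isWeakDiv_single_iff.1 (hg i)
  lapl_spec := (isWeakLap_iff_isWeakDiv fun i => isWeakDiv_single_iff.1 (hg i)).2 hl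

section OfL2

variable {u : L2Space (Esp N)} {g : Fin N → L2Space (Esp N)} {l : L2Space (Esp N)}
  (hg : ∀ i, IsWeakDiv (Pi.single i u) (g i)) (hl : IsWeakDiv g l)

@[simp] lemma toL2_ofL2 : (ofL2 u g l hg hl).toL2 = u := Lp.toLp_coeFn u _

@[simp] lemma gradL2_ofL2 : (ofL2 u g l hg hl).gradL2 = g := funext fun i => Lp.toLp_coeFn (g i) _

@[simp] lemma laplL2_ofL2 : (ofL2 u g l hg hl).laplL2 = l := Lp.toLp_coeFn l _

end OfL2

lemma massSq_eq (U : H2 N) : U.massSq = ‖U.toL2‖ ^ 2 := by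
  rw [norm_sq_eq_integral_norm_sq, massSq]
  exact integral_congr_ae (U.coeFn_toL2.fun_comp fun z => ‖z‖ ^ 2).symm

lemma gradSq_eq (U : H2 N) : U.gradSq = ∑ i, ‖U.gradL2 i‖ ^ 2 := by
  simp only [norm_sq_eq_integral_norm_sq, gradSq]
  exact Finset.sum_congr rfl fun i _ =>
    integral_congr_ae ((U.coeFn_gradL2 i).fun_comp fun z => ‖z‖ ^ 2).symm

lemma lapSq_eq (U : H2 N) : U.lapSq = ‖U.laplL2‖ ^ 2 := by
  rw [norm_sq_eq_integral_norm_sq, lapSq]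
  exact integral_congr_ae (U.coeFn_laplL2.fun_comp fun z => ‖z‖ ^ 2).symm

lemma pPow_eq (U : H2 N) : U.pPow σ = ∫ x, ‖U.toL2 x‖ ^ (2 * σ + 2) :=
  integral_congr_ae (U.coeFn_toL2.fun_comp fun z => ‖z‖ ^ (2 * σ + 2)).symm

/-- The translate `x ↦ U (x + a)`. -/
def shift (a : Esp N) (U : H2 N) : H2 N :=
  ofL2 (translateL2 a U.toL2) (fun i => translateL2 a (U.gradL2 i)) (translateL2 a U.laplL2)
    (fun i => by
      have h := (U.isWeakDiv_gradL2 i).translateL2 a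
      simp only [Pi.apply_single (fun _ => translateL2 a) fun _ => map_zero _] at h
      exact h)
    (U.isWeakDiv_laplL2.translateL2 a)

instance : Sub (H2 N) where
  sub U W := ofL2 (U.toL2 - W.toL2) (U.gradL2 - W.gradL2) (U.laplL2 - W.laplL2)
    (fun i => by
      rw [Pi.single_sub]
      exact (U.isWeakDiv_gradL2 i).sub (W.isWeakDiv_gradL2 i))
    (U.isWeakDiv_laplL2.sub W.isWeakDiv_laplL2)

instance : SMul ℝ (H2 N) where
  smul c U := ofL2 ((c : ℂ) • U.toL2) ((c : ℂ) • U.gradL2) ((c : ℂ) • U.laplL2)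
    (fun i => by
      rw [Pi.single_smul]
      exact (U.isWeakDiv_gradL2 i).const_smul c)
    (U.isWeakDiv_laplL2.const_smul c)

@[simp] lemma toL2_shift (a : Esp N) (U : H2 N) : (U.shift a).toL2 = translateL2 a U.toL2 :=
  toL2_ofL2 ..

@[simp] lemma gradL2_shift (a : Esp N) (U : H2 N) (i : Fin N) :
    (U.shift a).gradL2 i = translateL2 a (U.gradL2 i) := congrFun (gradL2_ofL2 ..) i

@[simp] lemma laplL2_shift (a : Esp N) (U : H2 N) :
    (U.shift a).laplL2 = translateL2 a U.laplL2 := laplL2_ofL2 ..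

@[simp] lemma toL2_sub (U W : H2 N) : (U - W).toL2 = U.toL2 - W.toL2 := toL2_ofL2 ..

@[simp] lemma gradL2_sub (U W : H2 N) (i : Fin N) :
    (U - W).gradL2 i = U.gradL2 i - W.gradL2 i := congrFun (gradL2_ofL2 ..) i

@[simp] lemma laplL2_sub (U W : H2 N) : (U - W).laplL2 = U.laplL2 - W.laplL2 := laplL2_ofL2 ..

@[simp] lemma toL2_smul (c : ℝ) (U : H2 N) : (c • U).toL2 = (c : ℂ) • U.toL2 := toL2_ofL2 ..

@[simp] lemma gradL2_smul (c : ℝ) (U : H2 N) (i : Fin N) :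
    (c • U).gradL2 i = (c : ℂ) • U.gradL2 i := congrFun (gradL2_ofL2 ..) i

@[simp] lemma laplL2_smul (c : ℝ) (U : H2 N) : (c • U).laplL2 = (c : ℂ) • U.laplL2 :=
  laplL2_ofL2 ..

lemma massSq_shift (a : Esp N) (U : H2 N) : (U.shift a).massSq = U.massSq := by
  simp [massSq_eq]

lemma gradSq_shift (a : Esp N) (U : H2 N) : (U.shift a).gradSq = U.gradSq := by
  simp [gradSq_eq]

lemma lapSq_shift (a : Esp N) (U : H2 N) : (U.shift a).lapSq = U.lapSq := by
  simp [lapSq_eq]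

lemma pPow_shift (a : Esp N) (U : H2 N) : (U.shift a).pPow σ = U.pPow σ := by
  rw [pPow_eq, pPow_eq, ← integral_add_right_eq_self (fun x => ‖U.toL2 x‖ ^ _) a, toL2_shift]
  exact integral_congr_ae ((coeFn_translateL2 a U.toL2).fun_comp fun z => ‖z‖ ^ (2 * σ + 2))

lemma energy_shift (a : Esp N) (U : H2 N) : (U.shift a).energy σ = U.energy σ := by
  rw [energy, lapSq_shift, gradSq_shift, pPow_shift, energy]

lemma massSq_smul (c : ℝ) (U : H2 N) : (c • U).massSq = c ^ 2 * U.massSq := by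
  simp only [massSq_eq, toL2_smul, norm_smul, mul_pow, Complex.norm_real, Real.norm_eq_abs, sq_abs]

lemma gradSq_smul (c : ℝ) (U : H2 N) : (c • U).gradSq = c ^ 2 * U.gradSq := by
  simp only [gradSq_eq, gradL2_smul, norm_smul, mul_pow, Complex.norm_real, Real.norm_eq_abs,
    sq_abs, Finset.mul_sum]

lemma lapSq_smul (c : ℝ) (U : H2 N) : (c • U).lapSq = c ^ 2 * U.lapSq := by
  simp only [lapSq_eq, laplL2_smul, norm_smul, mul_pow, Complex.norm_real, Real.norm_eq_abs, sq_abs]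

lemma pPow_smul (c : ℝ) (U : H2 N) : (c • U).pPow σ = |c| ^ (2 * σ + 2) * U.pPow σ := by
  rw [pPow_eq, pPow_eq, ← integral_const_mul, toL2_smul]
  refine integral_congr_ae ?_
  filter_upwards [Lp.coeFn_smul (c : ℂ) U.toL2] with x hx
  rw [hx, Pi.smul_apply, norm_smul, Complex.norm_real, Real.norm_eq_abs,
    Real.mul_rpow (abs_nonneg c) (norm_nonneg _)]

end H2

/-! ### The Fourier transform of an `H²` function -/

namespace H2

variable {N : ℕ}

lemma fourier_gradL2_ae_eq (U : H2 N) (i : Fin N) :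
    (𝓕 (U.gradL2 i) : L2Space (Esp N)) =ᵐ[volume]
      fun ξ => (2 * Real.pi * Complex.I) * ξ i * (𝓕 U.toL2 : L2Space (Esp N)) ξ := by
  filter_upwards [(U.isWeakDiv_gradL2 i).fourier_ae_eq,
    Lp.coeFn_zero ℂ 2 (volume : Measure (Esp N))] with ξ hξ hzero
  rw [hξ, Finset.sum_eq_single i, Pi.single_eq_same]
  · intro j _ hj
    rw [Pi.single_eq_of_ne hj, FourierTransform.fourier_zero, hzero, Pi.zero_apply, mul_zero]
  · simp

lemma ofReal_two_pi_mul_norm_sq (ξ : Esp N) :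
    (((2 * Real.pi * ‖ξ‖) ^ 2 : ℝ) : ℂ) = (2 * Real.pi) ^ 2 * ∑ i, (ξ i : ℂ) ^ 2 := by
  rw [mul_pow, EuclideanSpace.real_norm_sq_eq]
  push_cast
  rfl

lemma fourier_laplL2_ae_eq (U : H2 N) :
    (𝓕 U.laplL2 : L2Space (Esp N)) =ᵐ[volume]
      fun ξ => -((2 * Real.pi * ‖ξ‖) ^ 2 : ℝ) * (𝓕 U.toL2 : L2Space (Esp N)) ξ := by
  filter_upwards [U.isWeakDiv_laplL2.fourier_ae_eq,
    eventually_all.2 fun i => U.fourier_gradL2_ae_eq i] with ξ hξ hgrad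
  rw [hξ, ofReal_two_pi_mul_norm_sq, Finset.mul_sum, ← Finset.sum_neg_distrib, Finset.sum_mul]
  refine Finset.sum_congr rfl fun i _ => ?_
  rw [hgrad i]
  linear_combination (2 * Real.pi) ^ 2 * (ξ i : ℂ) ^ 2 * (𝓕 U.toL2 : L2Space (Esp N)) ξ *
    Complex.I_sq

lemma sum_inner_gradL2 (U : H2 N) :
    ∑ i, inner ℂ (U.gradL2 i) (U.gradL2 i) = -inner ℂ U.toL2 U.laplL2 := by
  simp only [← Lp.inner_fourier_eq (U.gradL2 _), ← Lp.inner_fourier_eq U.toL2, L2.inner_def]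
  rw [← integral_finsetSum _ fun i _ => L2.integrable_inner _ _, ← integral_neg]
  refine integral_congr_ae ?_
  filter_upwards [U.fourier_laplL2_ae_eq, eventually_all.2 fun i => U.fourier_gradL2_ae_eq i]
    with ξ hlapl hgrad
  rw [RCLike.inner_apply, hlapl, ofReal_two_pi_mul_norm_sq, Finset.mul_sum,
    ← Finset.sum_neg_distrib, Finset.sum_mul, Finset.sum_mul, ← Finset.sum_neg_distrib]
  refine Finset.sum_congr rfl fun i _ => ?_
  simp only [hgrad, RCLike.inner_apply, map_mul, Complex.conj_ofReal, Complex.conj_I, map_ofNat]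
  linear_combination -(2 * Real.pi) ^ 2 * (ξ i : ℂ) ^ 2 * (𝓕 U.toL2 : L2Space (Esp N)) ξ *
    (starRingEnd ℂ) ((𝓕 U.toL2 : L2Space (Esp N)) ξ) * Complex.I_sq

lemma gradSq_le (U : H2 N) : U.gradSq ≤ ‖U.toL2‖ * ‖U.laplL2‖ := by
  have h := congrArg Complex.re U.sum_inner_gradL2
  rw [Complex.re_sum, Complex.neg_re] at h
  calc U.gradSq = ∑ i, (inner ℂ (U.gradL2 i) (U.gradL2 i)).re := by
        rw [gradSq_eq]
        exact Finset.sum_congr rfl fun i _ => norm_sq_eq_re_inner (𝕜 := ℂ) _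
    _ = -(inner ℂ U.toL2 U.laplL2).re := h
    _ ≤ ‖inner ℂ U.toL2 U.laplL2‖ := (neg_le_abs _).trans (Complex.abs_re_le_norm _)
    _ ≤ ‖U.toL2‖ * ‖U.laplL2‖ := norm_inner_le_norm _ _

lemma gradSq_sq_le (U : H2 N) : U.gradSq ^ 2 ≤ U.massSq * U.lapSq := by
  rw [massSq_eq, lapSq_eq, ← mul_pow]
  exact pow_le_pow_left₀ (Finset.sum_nonneg fun i _ => integral_nonneg fun x => sq_nonneg _)
    U.gradSq_le 2

end H2

/-! ### The spectral measure and the Gagliardo–Nirenberg inequality -/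

section SpectralMeasure

variable {V : Type*} [NormedAddCommGroup V] [InnerProductSpace ℝ V] [FiniteDimensional ℝ V]
  [MeasurableSpace V] [BorelSpace V]

/-- The distribution of the mass of `f` over frequencies: the measure with density `|𝓕 f|²`. -/
def spectralMeasure (f : L2Space V) : Measure V :=
  volume.withDensity fun ξ => ENNReal.ofReal (‖(𝓕 f : L2Space V) ξ‖ ^ 2)

lemma measurable_ofReal_norm_sq (f : L2Space V) :
    Measurable fun ξ => ENNReal.ofReal (‖f ξ‖ ^ 2) :=
  ((Lp.stronglyMeasurable f).measurable.norm.pow_const 2).ennreal_ofReal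

lemma lintegral_spectralMeasure (f : L2Space V) {w : V → ℝ≥0∞} (hw : Measurable w) :
    ∫⁻ ξ, w ξ ∂spectralMeasure f =
      ∫⁻ ξ, ENNReal.ofReal (‖(𝓕 f : L2Space V) ξ‖ ^ 2) * w ξ :=
  lintegral_withDensity_eq_lintegral_mul _ (measurable_ofReal_norm_sq _) hw

lemma spectralMeasure_univ (f : L2Space V) :
    spectralMeasure f Set.univ = ENNReal.ofReal (‖f‖ ^ 2) := by
  rw [spectralMeasure, withDensity_apply _ MeasurableSet.univ, setLIntegral_univ,
    ← ofReal_norm_sq_eq_lintegral, Lp.norm_fourier_eq]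

lemma spectralMeasure_highFreq (A : ℝ) (f : L2Space V) :
    spectralMeasure (highFreq A f) = (spectralMeasure f).restrict (Metric.ball 0 A)ᶜ := by
  rw [spectralMeasure, spectralMeasure, restrict_withDensity measurableSet_ball.compl,
    ← withDensity_indicator measurableSet_ball.compl]
  refine withDensity_congr_ae ?_
  filter_upwards [fourier_highFreq A f] with ξ hξ
  rw [hξ]
  by_cases h : ξ ∈ (Metric.ball (0 : V) A)ᶜ
  · rw [Set.indicator_of_mem h, Set.indicator_of_mem h]
  · rw [Set.indicator_of_notMem h, Set.indicator_of_notMem h, norm_zero, zero_pow two_ne_zero,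
      ENNReal.ofReal_zero]

lemma ofReal_norm_sq_highFreq (A : ℝ) (f : L2Space V) :
    ENNReal.ofReal (‖highFreq A f‖ ^ 2) = spectralMeasure f (Metric.ball 0 A)ᶜ := by
  rw [← spectralMeasure_univ, spectralMeasure_highFreq, Measure.restrict_apply_univ]

/-- The square of the homogeneous Sobolev norm of order `q / 2`, that is of `(-Δ)^(q / 4) f` in
`L²`, with value `∞` outside of the Sobolev space. -/
def homSobolevSq (q : ℝ) (f : L2Space V) : ℝ≥0∞ :=
  ∫⁻ ξ, ENNReal.ofReal ((2 * Real.pi * ‖ξ‖) ^ q) ∂spectralMeasure f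

lemma homSobolevSq_highFreq_le (q A : ℝ) (f : L2Space V) :
    homSobolevSq q (highFreq A f) ≤ homSobolevSq q f := by
  rw [homSobolevSq, spectralMeasure_highFreq]
  exact setLIntegral_le_lintegral _ _

lemma ofReal_norm_sq_highFreq_le {q A : ℝ} (hq : 0 ≤ q) (hA : 0 < A) (f : L2Space V) :
    ENNReal.ofReal (‖highFreq A f‖ ^ 2) ≤
      homSobolevSq q f / ENNReal.ofReal ((2 * Real.pi * A) ^ q) := by
  have hball : (Metric.ball (0 : V) A)ᶜ ⊆ {ξ | ENNReal.ofReal ((2 * Real.pi * A) ^ q) ≤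
      ENNReal.ofReal ((2 * Real.pi * ‖ξ‖) ^ q)} := by
    intro ξ hξ
    have hle : A ≤ ‖ξ‖ := by simpa using hξ
    rw [Set.mem_ofPred_eq]
    gcongr
  rw [ofReal_norm_sq_highFreq]
  exact (measure_mono hball).trans (meas_ge_le_lintegral_div (by fun_prop)
    (ENNReal.ofReal_pos.2 (by positivity)).ne' ENNReal.ofReal_ne_top)

lemma homSobolevSq_le_add {q r ε K : ℝ} (h : ∀ t : ℝ, 0 ≤ t → t ^ q ≤ ε * t ^ r + K) (hε : 0 ≤ ε)
    (f : L2Space V) :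
    homSobolevSq q f ≤
      ENNReal.ofReal ε * homSobolevSq r f + ENNReal.ofReal K * ENNReal.ofReal (‖f‖ ^ 2) := by
  rw [homSobolevSq, homSobolevSq, ← lintegral_const_mul _ (by fun_prop), ← spectralMeasure_univ,
    ← lintegral_const, ← lintegral_add_right _ measurable_const]
  refine lintegral_mono fun ξ => ?_
  rw [← ENNReal.ofReal_mul hε]
  exact (ENNReal.ofReal_le_ofReal (h _ (by positivity))).trans ENNReal.ofReal_add_le

end SpectralMeasure

section GagliardoNirenberg

variable {V : Type*} [NormedAddCommGroup V] [InnerProductSpace ℝ V] [FiniteDimensional ℝ V]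
  [MeasurableSpace V] [BorelSpace V]

lemma measure_le_norm_le {α E : Type*} [MeasurableSpace α] {μ : Measure α}
    [NormedAddCommGroup E] (f : Lp E 2 μ) {s : ℝ} (hs : 0 < s) :
    μ {x | s ≤ ‖f x‖} ≤ ENNReal.ofReal (1 / s ^ 2) * ENNReal.ofReal (‖f‖ ^ 2) := by
  have hset : {x | s ≤ ‖f x‖} ⊆ {x | ENNReal.ofReal s ≤ ‖f x‖ₑ} := by
    intro x (hx : s ≤ ‖f x‖)
    rw [Set.mem_ofPred_eq, ← ofReal_norm]
    gcongr
  refine (measure_mono hset).trans ((Lp.meas_ge_le_mul_pow_enorm f two_ne_zero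
    ENNReal.ofNat_ne_top (ENNReal.ofReal_pos.2 hs).ne').trans_eq ?_)
  rw [← ENNReal.ofReal_inv_of_pos hs, ENNReal.toReal_ofNat, ENNReal.rpow_ofNat,
    ENNReal.rpow_ofNat, ← ENNReal.ofReal_pow (by positivity), ← ENNReal.ofReal_pow (by positivity),
    inv_pow, one_div]

variable (V) in
lemma exists_sqrt_volume_ball_eq : ∃ c : ℝ, 0 < c ∧ ∀ A : ℝ, 0 < A →
    √(volume.real (Metric.ball (0 : V) A)) =
      c * (2 * Real.pi * A) ^ ((Module.finrank ℝ V : ℝ) / 2) := by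
  have hball : 0 < volume.real (Metric.ball (0 : V) 1) :=
    ENNReal.toReal_pos (Metric.measure_ball_pos _ _ one_pos).ne' measure_ball_lt_top.ne
  refine ⟨√(volume.real (Metric.ball (0 : V) 1)) / (2 * Real.pi) ^ ((Module.finrank ℝ V : ℝ) / 2),
    by positivity, fun A hA => ?_⟩
  rw [measureReal_def, Measure.addHaar_ball_of_pos _ _ hA, ENNReal.toReal_mul,
    ENNReal.toReal_ofReal (by positivity), Real.sqrt_mul (by positivity), ← measureReal_def,
    Real.mul_rpow (by positivity) hA.le, Real.sqrt_eq_rpow (A ^ _),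
    ← Real.rpow_natCast_mul hA.le, mul_one_div]
  field_simp

/-- The frequency `A` at which `f` is split is such that the low frequencies contribute at most
`t / 2` at every point. -/
lemma exists_measure_lt_norm_le [Nontrivial V] : ∃ c : ℝ, 0 < c ∧ ∀ (f : L2Space V) (t : ℝ),
    0 < t → volume {x | t < ‖f x‖} ≤ ENNReal.ofReal (4 / t ^ 2) *
      spectralMeasure f
        {ξ | t ≤ c * ‖f‖ * (2 * Real.pi * ‖ξ‖) ^ ((Module.finrank ℝ V : ℝ) / 2)} := by
  obtain ⟨c, hc, hvol⟩ := exists_sqrt_volume_ball_eq V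
  refine ⟨2 * c, by positivity, fun f t ht => ?_⟩
  rcases eq_or_ne f 0 with rfl | hf
  · have hnull : volume {x | t < ‖(0 : L2Space V) x‖} = 0 := by
      refine measure_eq_zero_iff_ae_notMem.2 ?_
      filter_upwards [Lp.coeFn_zero ℂ 2 (volume : Measure V)] with x hx
      simp only [hx, Pi.zero_apply, norm_zero, not_lt, ht.le]
    exact hnull.trans_le zero_le
  have hd : 0 < (Module.finrank ℝ V : ℝ) / 2 := by
    have : 0 < Module.finrank ℝ V := Module.finrank_pos
    positivity
  obtain ⟨A, hA, hAt⟩ : ∃ A : ℝ, 0 < A ∧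
      2 * c * ‖f‖ * (2 * Real.pi * A) ^ ((Module.finrank ℝ V : ℝ) / 2) = t := by
    refine ⟨(t / (2 * c * ‖f‖)) ^ ((Module.finrank ℝ V : ℝ) / 2)⁻¹ / (2 * Real.pi),
      by positivity, ?_⟩
    rw [mul_div_cancel₀ _ (by positivity), Real.rpow_inv_rpow (by positivity) hd.ne']
    field_simp
  have hlow (x : V) : ‖lowFreq A f x‖ ≤ t / 2 := by
    refine (norm_lowFreq_le A f x).trans_eq ?_
    rw [hvol A hA]
    linarith
  have hhigh : volume {x | t < ‖f x‖} ≤ volume {x | t / 2 ≤ ‖highFreq A f x‖} := by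
    refine measure_mono_ae ?_
    filter_upwards [lowFreq_add_highFreq A f] with x hx (hlt : t < ‖f x‖)
    rw [hx] at hlt
    have := norm_add_le (lowFreq A f x) (highFreq A f x)
    exact show t / 2 ≤ ‖highFreq A f x‖ by linarith [hlow x]
  have hball : (Metric.ball (0 : V) A)ᶜ ⊆
      {ξ | t ≤ 2 * c * ‖f‖ * (2 * Real.pi * ‖ξ‖) ^ ((Module.finrank ℝ V : ℝ) / 2)} := by
    intro ξ hξ
    have hle : A ≤ ‖ξ‖ := by simpa using hξ
    rw [Set.mem_ofPred_eq, ← hAt]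
    gcongr
  calc volume {x | t < ‖f x‖}
      ≤ ENNReal.ofReal (1 / (t / 2) ^ 2) * ENNReal.ofReal (‖highFreq A f‖ ^ 2) :=
        hhigh.trans (measure_le_norm_le _ (by positivity))
    _ ≤ _ := by
        rw [ofReal_norm_sq_highFreq, show 1 / (t / 2) ^ 2 = 4 / t ^ 2 by field_simp; norm_num]
        gcongr

lemma lintegral_norm_rpow_le_of_measure_lt_le {α β E : Type*} [MeasurableSpace α]
    [MeasurableSpace β] {μ : Measure α} {ν : Measure β} [NormedAddCommGroup E] {f : α → E}
    (hf : AEStronglyMeasurable f μ) {T : β → ℝ} (hT : ∀ ξ, 0 ≤ T ξ) (hTm : AEMeasurable T ν)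
    {σ : ℝ} (hσ : 0 < σ)
    (h : ∀ t, 0 < t → μ {x | t < ‖f x‖} ≤ ENNReal.ofReal (4 / t ^ 2) * ν {ξ | t ≤ T ξ}) :
    ∫⁻ x, ENNReal.ofReal (‖f x‖ ^ (2 * σ + 2)) ∂μ ≤
      ENNReal.ofReal (4 * (σ + 1) / σ) * ∫⁻ ξ, ENNReal.ofReal (T ξ ^ (2 * σ)) ∂ν := by
  have hslice (t : ℝ) (ht : t ∈ Set.Ioi (0 : ℝ)) :
      μ {x | t < ‖f x‖} * ENNReal.ofReal (t ^ (2 * σ + 2 - 1)) ≤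
        ENNReal.ofReal 4 * (ν {ξ | t ≤ T ξ} * ENNReal.ofReal (t ^ (2 * σ - 1))) := by
    have ht : 0 < t := ht
    have hpow : 4 / t ^ 2 * t ^ (2 * σ + 2 - 1) = 4 * t ^ (2 * σ - 1) := by
      rw [show 2 * σ + 2 - 1 = (2 * σ - 1) + (2 : ℕ) by push_cast; ring, Real.rpow_add ht,
        Real.rpow_natCast]
      field_simp
    calc μ {x | t < ‖f x‖} * ENNReal.ofReal (t ^ (2 * σ + 2 - 1))
        ≤ ENNReal.ofReal (4 / t ^ 2) * ν {ξ | t ≤ T ξ} *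
            ENNReal.ofReal (t ^ (2 * σ + 2 - 1)) := by gcongr; exact h t ht
      _ = ENNReal.ofReal (4 / t ^ 2 * t ^ (2 * σ + 2 - 1)) * ν {ξ | t ≤ T ξ} := by
          rw [ENNReal.ofReal_mul (by positivity), mul_right_comm]
      _ = ENNReal.ofReal 4 * (ν {ξ | t ≤ T ξ} * ENNReal.ofReal (t ^ (2 * σ - 1))) := by
          rw [hpow, ENNReal.ofReal_mul (by positivity), mul_assoc, mul_comm (ν _)]
  rw [lintegral_rpow_eq_lintegral_meas_lt_mul μ (ae_of_all _ fun x => norm_nonneg (f x))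
      hf.norm.aemeasurable (by positivity),
    lintegral_rpow_eq_lintegral_meas_le_mul ν (ae_of_all _ hT) hTm (by positivity)]
  calc ENNReal.ofReal (2 * σ + 2) *
        ∫⁻ t in Set.Ioi 0, μ {x | t < ‖f x‖} * ENNReal.ofReal (t ^ (2 * σ + 2 - 1))
      ≤ ENNReal.ofReal (2 * σ + 2) * (ENNReal.ofReal 4 *
          ∫⁻ t in Set.Ioi 0, ν {ξ | t ≤ T ξ} * ENNReal.ofReal (t ^ (2 * σ - 1))) := by
        gcongr ENNReal.ofReal (2 * σ + 2) * ?_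
        rw [← lintegral_const_mul' _ _ ENNReal.ofReal_ne_top]
        exact setLIntegral_mono' measurableSet_Ioi hslice
    _ = _ := by
        rw [← mul_assoc, ← mul_assoc, ← ENNReal.ofReal_mul (by positivity),
          ← ENNReal.ofReal_mul (by positivity)]
        congr 2
        field_simp

lemma exists_lintegral_norm_rpow_le_homSobolevSq (V : Type*) [NormedAddCommGroup V]
    [InnerProductSpace ℝ V] [FiniteDimensional ℝ V] [MeasurableSpace V] [BorelSpace V]
    [Nontrivial V] {σ : ℝ} (hσ : 0 < σ) : ∃ C : ℝ, 0 ≤ C ∧ ∀ f : L2Space V,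
      ∫⁻ x, ENNReal.ofReal (‖f x‖ ^ (2 * σ + 2)) ≤
        ENNReal.ofReal (C * (‖f‖ ^ 2) ^ σ) * homSobolevSq (Module.finrank ℝ V * σ) f := by
  obtain ⟨c, hc, hlevel⟩ := exists_measure_lt_norm_le (V := V)
  refine ⟨4 * (σ + 1) / σ * c ^ (2 * σ), by positivity, fun f => ?_⟩
  refine (lintegral_norm_rpow_le_of_measure_lt_le (Lp.aestronglyMeasurable f)
    (fun ξ => by positivity) (by fun_prop) hσ (hlevel f)).trans_eq ?_
  have hpow (ξ : V) : (c * ‖f‖ * (2 * Real.pi * ‖ξ‖) ^ ((Module.finrank ℝ V : ℝ) / 2)) ^ (2 * σ) =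
      c ^ (2 * σ) * (‖f‖ ^ 2) ^ σ * (2 * Real.pi * ‖ξ‖) ^ (Module.finrank ℝ V * σ) := by
    rw [Real.mul_rpow (by positivity) (by positivity), Real.mul_rpow hc.le (norm_nonneg f),
      ← Real.rpow_mul (by positivity), ← Real.rpow_natCast_mul (norm_nonneg f), Nat.cast_two]
    ring_nf
  simp only [hpow, homSobolevSq]
  rw [← lintegral_const_mul _ (by fun_prop), ← lintegral_const_mul _ (by fun_prop)]
  refine lintegral_congr fun ξ => ?_
  rw [← ENNReal.ofReal_mul (by positivity), ← ENNReal.ofReal_mul (by positivity)]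
  ring_nf

lemma exists_rpow_le_mul_rpow_add {q r ε : ℝ} (hq : 0 ≤ q) (hqr : q < r) (hε : 0 < ε) :
    ∃ K : ℝ, 0 ≤ K ∧ ∀ t : ℝ, 0 ≤ t → t ^ q ≤ ε * t ^ r + K := by
  refine ⟨(ε⁻¹ ^ (r - q)⁻¹) ^ q, by positivity, fun t ht => ?_⟩
  rcases le_total t (ε⁻¹ ^ (r - q)⁻¹) with hle | hge
  · have : t ^ q ≤ (ε⁻¹ ^ (r - q)⁻¹) ^ q := by gcongr
    linarith [show 0 ≤ ε * t ^ r by positivity]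
  · have ht0 : 0 < t := lt_of_lt_of_le (by positivity) hge
    have hlarge : 1 ≤ ε * t ^ (r - q) := by
      rw [← inv_le_iff_one_le_mul₀' hε, ← Real.rpow_inv_le_iff_of_pos (by positivity) ht
        (by linarith)]
      exact hge
    calc t ^ q ≤ ε * t ^ (r - q) * t ^ q := le_mul_of_one_le_left (by positivity) hlarge
      _ = ε * t ^ r := by rw [mul_assoc, ← Real.rpow_add ht0, sub_add_cancel]
      _ ≤ _ := le_add_of_nonneg_right (by positivity)

end GagliardoNirenberg

namespace H2

variable {N : ℕ} {σ : ℝ}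

lemma massSq_nonneg (U : H2 N) : 0 ≤ U.massSq := integral_nonneg fun _ => sq_nonneg _

lemma lapSq_nonneg (U : H2 N) : 0 ≤ U.lapSq := integral_nonneg fun _ => sq_nonneg _

lemma pPow_nonneg (U : H2 N) : 0 ≤ U.pPow σ := integral_nonneg fun _ => by positivity

lemma homSobolevSq_four_toL2 (U : H2 N) : homSobolevSq 4 U.toL2 = ENNReal.ofReal U.lapSq := by
  rw [homSobolevSq, lintegral_spectralMeasure _ (by fun_prop), lapSq_eq, ← Lp.norm_fourier_eq,
    ofReal_norm_sq_eq_lintegral]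
  refine lintegral_congr_ae ?_
  filter_upwards [U.fourier_laplL2_ae_eq] with ξ hξ
  rw [hξ, ← ENNReal.ofReal_mul (by positivity), norm_mul, norm_neg, Complex.norm_real,
    Real.norm_of_nonneg (by positivity), mul_pow, ← pow_mul, ← Real.rpow_natCast _ (2 * 2),
    mul_comm]
  norm_num

lemma homSobolevSq_toL2_le {q ε K : ℝ} (h : ∀ t : ℝ, 0 ≤ t → t ^ q ≤ ε * t ^ (4 : ℝ) + K)
    (hε : 0 ≤ ε) (hK : 0 ≤ K) (U : H2 N) :
    homSobolevSq q U.toL2 ≤ ENNReal.ofReal (ε * U.lapSq + K * U.massSq) := by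
  refine (homSobolevSq_le_add h hε U.toL2).trans_eq ?_
  have hL := U.lapSq_nonneg
  have hM := U.massSq_nonneg
  rw [homSobolevSq_four_toL2, ← massSq_eq, ← ENNReal.ofReal_mul hε, ← ENNReal.ofReal_mul hK,
    ← ENNReal.ofReal_add (by positivity) (by positivity)]

lemma exists_lintegral_rpow_le [NeZero N] (hσ : 0 < σ) : ∃ C : ℝ, 0 ≤ C ∧ ∀ ε K : ℝ,
    0 ≤ ε → 0 ≤ K → (∀ t : ℝ, 0 ≤ t → t ^ (N * σ) ≤ ε * t ^ (4 : ℝ) + K) → ∀ U : H2 N,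
      ∫⁻ x, ENNReal.ofReal (‖U.toL2 x‖ ^ (2 * σ + 2)) ≤
        ENNReal.ofReal (C * U.massSq ^ σ * (ε * U.lapSq + K * U.massSq)) := by
  obtain ⟨C, hC, hGN⟩ := exists_lintegral_norm_rpow_le_homSobolevSq (Esp N) hσ
  rw [finrank_euclideanSpace_fin] at hGN
  refine ⟨C, hC, fun ε K hε hK h U => (hGN U.toL2).trans ?_⟩
  have hM := U.massSq_nonneg
  rw [← massSq_eq, ENNReal.ofReal_mul (p := C * _) (by positivity)]
  gcongr
  exact U.homSobolevSq_toL2_le h hε hK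

lemma rpow_le_one_mul_rpow_add_one {q r t : ℝ} (hq : 0 ≤ q) (hqr : q ≤ r) (ht : 0 ≤ t) :
    t ^ q ≤ 1 * t ^ r + 1 := by
  rcases le_total t 1 with ht1 | ht1
  · linarith [Real.rpow_le_one ht ht1 hq, Real.rpow_nonneg ht r]
  · linarith [Real.rpow_le_rpow_of_exponent_le ht1 hqr]

lemma integrable_norm_rpow [NeZero N] (hσ : 0 < σ) (h : N * σ ≤ 4) (U : H2 N) :
    Integrable fun x => ‖U.toL2 x‖ ^ (2 * σ + 2) := by
  obtain ⟨C, -, hGN⟩ := exists_lintegral_rpow_le (N := N) hσ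
  refine ⟨((Lp.stronglyMeasurable U.toL2).norm.measurable.pow_const _).aestronglyMeasurable, ?_⟩
  rw [hasFiniteIntegral_iff_ofReal (ae_of_all _ fun x => by positivity)]
  exact (hGN 1 1 zero_le_one zero_le_one (fun t ht => rpow_le_one_mul_rpow_add_one
    (by positivity) h ht) U).trans_lt ENNReal.ofReal_lt_top

lemma exists_pPow_le [NeZero N] (hσ : 0 < σ) : ∃ C : ℝ, 0 ≤ C ∧ ∀ ε K : ℝ,
    0 ≤ ε → 0 ≤ K → (∀ t : ℝ, 0 ≤ t → t ^ (N * σ) ≤ ε * t ^ (4 : ℝ) + K) → ∀ U : H2 N,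
      U.pPow σ ≤ C * U.massSq ^ σ * (ε * U.lapSq + K * U.massSq) := by
  obtain ⟨C, hC, hGN⟩ := exists_lintegral_rpow_le (N := N) hσ
  refine ⟨C, hC, fun ε K hε hK h U => ?_⟩
  have hL := U.lapSq_nonneg
  have hM := U.massSq_nonneg
  rw [pPow_eq, integral_eq_lintegral_of_nonneg_ae (ae_of_all _ fun x => by positivity)
    ((Lp.stronglyMeasurable U.toL2).norm.measurable.pow_const _).aestronglyMeasurable]
  refine ENNReal.toReal_le_of_le_ofReal (by positivity) ?_
  exact hGN ε K hε hK h U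

lemma rLp_two {f : Esp N → ℂ} (hf : MemLp f 2 volume) : rLp 2 f = ‖hf.toLp f‖ := by
  rw [rLp, Lp.norm_toLp, ENNReal.ofReal_ofNat]

lemma nontriv_of_massSq_ne_zero {U : H2 N} (h : U.massSq ≠ 0) : U.Nontriv := fun hzero =>
  h (integral_eq_zero_of_ae (hzero.mono fun x hx => by simp [hx]))

lemma pPow_le_GNconst_mul [NeZero N] (hσ : 0 < σ) (h : N * σ = 4) (U : H2 N) :
    U.pPow σ ≤ GNconst N σ * (U.massSq ^ σ * U.lapSq) := by
  obtain ⟨C, hC, hGN⟩ := exists_pPow_le (N := N) hσ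
  have hGN (W : H2 N) : W.pPow σ ≤ C * (W.massSq ^ σ * W.lapSq) := by
    have := hGN 1 0 zero_le_one le_rfl (fun t _ => by rw [h]; simp) W
    linarith
  have hden (W : H2 N) : rLp 2 W.lapl ^ (N * σ / 2) * rLp 2 W.u ^ (2 + 2 * σ - N * σ / 2) =
      W.massSq ^ σ * W.lapSq := by
    rw [rLp_two W.lapl_mem, rLp_two W.u_mem, h, massSq_eq, lapSq_eq,
      ← Real.rpow_natCast_mul (norm_nonneg _), mul_comm, Nat.cast_two, ← Real.rpow_two]
    congr 2 <;> ring
  have hbdd : BddAbove {r : ℝ | ∃ W : H2 N, W.Nontriv ∧ r = W.pPow σ /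
      (rLp 2 W.lapl ^ (N * σ / 2) * rLp 2 W.u ^ (2 + 2 * σ - N * σ / 2))} := by
    refine ⟨C, ?_⟩
    rintro _ ⟨W, -, rfl⟩
    rw [hden]
    exact div_le_of_le_mul₀ (mul_nonneg (Real.rpow_nonneg W.massSq_nonneg _) W.lapSq_nonneg) hC
      (hGN W)
  rcases (mul_nonneg (Real.rpow_nonneg U.massSq_nonneg σ) U.lapSq_nonneg).eq_or_lt with h0 | hpos
  · have := hGN U
    rw [← h0, mul_zero] at this ⊢
    exact this
  · have hU : U.Nontriv := nontriv_of_massSq_ne_zero fun hzero => by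
      rw [hzero, Real.zero_rpow hσ.ne', zero_mul] at hpos
      exact lt_irrefl _ hpos
    rw [← div_le_iff₀ hpos, ← hden]
    exact le_csSup hbdd ⟨U, hU, rfl⟩

lemma GNconst_nonneg : 0 ≤ GNconst N σ := by
  refine Real.sSup_nonneg ?_
  rintro _ ⟨U, -, rfl⟩
  exact div_nonneg U.pPow_nonneg (by unfold rLp; positivity)

lemma GNconst_mul_rpow_lt {m : ℝ} (hσ : 0 < σ) (hm : 0 ≤ m) (h : m < kstar N σ) :
    GNconst N σ * m ^ σ < σ + 1 := by
  rcases (GNconst_nonneg (N := N) (σ := σ)).eq_or_lt with h0 | hpos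
  · rw [← h0, zero_mul]
    positivity
  · calc GNconst N σ * m ^ σ < GNconst N σ * kstar N σ ^ σ := by gcongr
      _ = σ + 1 := by
        rw [kstar, Real.mul_rpow (by positivity) (by positivity), ← Real.rpow_mul (by positivity),
          ← Real.rpow_mul hpos.le, one_div_mul_cancel hσ.ne', neg_mul, one_div_mul_cancel hσ.ne',
          Real.rpow_one, Real.rpow_neg_one]
        field_simp

/-! ### Coercivity -/

lemma two_mul_gradSq_le (U : H2 N) {a : ℝ} (ha : 0 < a) :
    2 * U.gradSq ≤ a * U.lapSq + a⁻¹ * U.massSq := by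
  have hL := U.lapSq_nonneg
  have hM := U.massSq_nonneg
  refine abs_le_of_sq_le_sq' ?_ (by positivity) |>.2
  have hamgm : 4 * (U.massSq * U.lapSq) ≤ (a * U.lapSq + a⁻¹ * U.massSq) ^ 2 := by
    have : a * U.lapSq * (a⁻¹ * U.massSq) = U.massSq * U.lapSq := by field_simp
    linarith [sq_nonneg (a * U.lapSq - a⁻¹ * U.massSq)]
  linarith [U.gradSq_sq_le]

lemma exists_pPow_le_of_lt [NeZero N] (hσ : 0 < σ) (h : N * σ < 4) {θ : ℝ} (hθ : 0 < θ) (M : ℝ) :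
    ∃ b : ℝ, ∀ U : H2 N, U.massSq ≤ M → U.pPow σ ≤ θ * U.lapSq + b := by
  obtain ⟨C, hC, hGN⟩ := exists_pPow_le (N := N) hσ
  have hpos : 0 < C * |M| ^ σ + 1 := by positivity
  obtain ⟨K, hK, hε⟩ := exists_rpow_le_mul_rpow_add (by positivity : 0 ≤ N * σ) h
    (div_pos hθ hpos)
  refine ⟨C * |M| ^ σ * (K * |M|), fun U hU => (hGN _ K (by positivity) hK hε U).trans ?_⟩
  have hU : U.massSq ≤ |M| := hU.trans (le_abs_self M)
  have hL := U.lapSq_nonneg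
  have hM := U.massSq_nonneg
  have hone : C * |M| ^ σ / (C * |M| ^ σ + 1) ≤ 1 := (div_le_one hpos).2 (by linarith)
  calc C * U.massSq ^ σ * (θ / (C * |M| ^ σ + 1) * U.lapSq + K * U.massSq)
      ≤ C * |M| ^ σ * (θ / (C * |M| ^ σ + 1) * U.lapSq + K * |M|) := by gcongr
    _ = C * |M| ^ σ / (C * |M| ^ σ + 1) * (θ * U.lapSq) + C * |M| ^ σ * (K * |M|) := by ring
    _ ≤ _ := by
      gcongr ?_ + _
      exact mul_le_of_le_one_left (by positivity) hone

lemma exists_pPow_le_of_lt_kstar [NeZero N] {m : ℝ} (hσ : 0 < σ) (hm : 0 ≤ m)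
    (h : N * σ < 4 ∨ N * σ = 4 ∧ m < kstar N σ) : ∃ θ < σ + 1, ∃ b, ∃ M > m, ∀ U : H2 N,
      U.massSq ≤ M → U.pPow σ ≤ θ * U.lapSq + b := by
  rcases h with hlt | ⟨heq, hk⟩
  · obtain ⟨b, hb⟩ := exists_pPow_le_of_lt hσ hlt hσ (m + 1)
    exact ⟨σ, by linarith, b, m + 1, by linarith, hb⟩
  · have hcont : ContinuousAt (fun M : ℝ => GNconst N σ * M ^ σ) m :=
      continuousAt_const.mul (Real.continuousAt_rpow_const m σ (Or.inr hσ.le))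
    obtain ⟨M, hM, hmM⟩ := ((hcont.eventually_lt_const
      (GNconst_mul_rpow_lt hσ hm hk)).filter_mono nhdsWithin_le_nhds |>.and
        (self_mem_nhdsWithin (s := Set.Ioi m))).exists
    refine ⟨GNconst N σ * M ^ σ, hM, 0, M, hmM, fun U hU => ?_⟩
    rw [add_zero, mul_assoc]
    refine (U.pPow_le_GNconst_mul hσ heq).trans ?_
    have := U.massSq_nonneg
    have := U.lapSq_nonneg
    have := GNconst_nonneg (N := N) (σ := σ)
    gcongr

lemma exists_mul_lapSq_le_energy_add [NeZero N] {m : ℝ} (hσ : 0 < σ) (hm : 0 ≤ m)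
    (h : N * σ < 4 ∨ N * σ = 4 ∧ m < kstar N σ) : ∃ a > 0, ∃ b, ∃ M > m, ∀ U : H2 N,
      U.massSq ≤ M → a * U.lapSq ≤ U.energy σ + b := by
  obtain ⟨θ, hθ, b, M, hmM, hle⟩ := exists_pPow_le_of_lt_kstar hσ hm h
  obtain ⟨a, ha, haθ⟩ : ∃ a : ℝ, 0 < a ∧ 1 - 1 / (σ + 1) * θ = 2 * a := by
    refine ⟨(1 - 1 / (σ + 1) * θ) / 2, ?_, by ring⟩
    have : 1 / (σ + 1) * θ < 1 := by rwa [one_div_mul_eq_div, div_lt_one (by linarith)]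
    linarith
  refine ⟨a, ha, a⁻¹ * M + 1 / (σ + 1) * b, M, hmM, fun U hU => ?_⟩
  have hpPow : 1 / (σ + 1) * U.pPow σ ≤ 1 / (σ + 1) * (θ * U.lapSq + b) := by
    gcongr
    exact hle U hU
  have hmass : a⁻¹ * U.massSq ≤ a⁻¹ * M := by gcongr
  rw [energy]
  linear_combination hpPow + hmass + U.two_mul_gradSq_le ha - U.lapSq * haθ

end H2

/-! ### Nonvanishing of the low frequencies -/

lemma rpow_le_of_le_add {a b x ε σ : ℝ} (hx : 0 ≤ x) (hb : 0 ≤ b) (hε : 0 ≤ ε) (hσ : 0 ≤ σ)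
    (hxab : x ≤ a + b) (ha : a ≤ ε) :
    x ^ (2 * σ + 2) ≤ 2 ^ (2 * σ + 2) * b ^ (2 * σ + 2) + (2 * ε) ^ (2 * σ) * x ^ 2 := by
  rcases le_total x (2 * ε) with hsmall | hlarge
  · calc x ^ (2 * σ + 2) = x ^ (2 * σ) * x ^ 2 := by
          rw [Real.rpow_add_of_nonneg hx (by positivity) zero_le_two, Real.rpow_two]
      _ ≤ (2 * ε) ^ (2 * σ) * x ^ 2 := by gcongr
      _ ≤ _ := le_add_of_nonneg_left (by positivity)
  · calc x ^ (2 * σ + 2) ≤ (2 * b) ^ (2 * σ + 2) := by gcongr; linarith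
      _ = 2 ^ (2 * σ + 2) * b ^ (2 * σ + 2) := Real.mul_rpow zero_le_two hb
      _ ≤ _ := le_add_of_nonneg_right (by positivity)

lemma tendsto_div_two_pi_mul_pow (R : ℝ) :
    Tendsto (fun A : ℝ => R / (2 * Real.pi * A) ^ 4) atTop (𝓝 0) :=
  tendsto_const_nhds.div_atTop
    ((tendsto_pow_atTop four_ne_zero).comp (tendsto_id.const_mul_atTop (by positivity)))

namespace H2

variable {N : ℕ} {σ : ℝ}

lemma norm_sq_highFreq_le {A : ℝ} (hA : 0 < A) (U : H2 N) :
    ‖highFreq A U.toL2‖ ^ 2 ≤ U.lapSq / (2 * Real.pi * A) ^ 4 := by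
  have h := ofReal_norm_sq_highFreq_le (q := 4) zero_le_four hA U.toL2
  rw [homSobolevSq_four_toL2, ← ENNReal.ofReal_div_of_pos (by positivity)] at h
  exact_mod_cast (ENNReal.ofReal_le_ofReal_iff (div_nonneg U.lapSq_nonneg (by positivity))).1 h

lemma exists_lintegral_highFreq_le [NeZero N] (hσ : 0 < σ) (h : N * σ ≤ 4) {R η : ℝ} (hR : 0 ≤ R)
    (hη : 0 < η) : ∃ A > 0, ∀ U : H2 N, U.massSq ≤ R → U.lapSq ≤ R →
      ∫⁻ x, ENNReal.ofReal (‖highFreq A U.toL2 x‖ ^ (2 * σ + 2)) ≤ ENNReal.ofReal η := by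
  obtain ⟨C, hC, hGN⟩ := exists_lintegral_norm_rpow_le_homSobolevSq (Esp N) hσ
  rw [finrank_euclideanSpace_fin] at hGN
  have hlim : Tendsto (fun A : ℝ => C * (R / (2 * Real.pi * A) ^ 4) ^ σ * (1 * R + 1 * R)) atTop
      (𝓝 0) := by
    have := (((tendsto_div_two_pi_mul_pow R).rpow_const (p := σ) (Or.inr hσ.le)).const_mul
      C).mul_const (1 * R + 1 * R)
    rwa [Real.zero_rpow hσ.ne', mul_zero, zero_mul] at this
  obtain ⟨A, hAη, hA⟩ := ((hlim.eventually_le_const hη).and (eventually_gt_atTop 0)).exists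
  refine ⟨A, hA, fun U hM hL => ?_⟩
  calc ∫⁻ x, ENNReal.ofReal (‖highFreq A U.toL2 x‖ ^ (2 * σ + 2))
      ≤ ENNReal.ofReal (C * (‖highFreq A U.toL2‖ ^ 2) ^ σ) *
          homSobolevSq (N * σ) (highFreq A U.toL2) := hGN _
    _ ≤ ENNReal.ofReal (C * (R / (2 * Real.pi * A) ^ 4) ^ σ) *
          ENNReal.ofReal (1 * R + 1 * R) := by
        gcongr
        · refine (U.norm_sq_highFreq_le hA).trans ?_
          gcongr
        · refine (homSobolevSq_highFreq_le _ _ _).trans ((U.homSobolevSq_toL2_le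
            (fun t ht => rpow_le_one_mul_rpow_add_one (by positivity) h ht) zero_le_one
            zero_le_one).trans ?_)
          gcongr
    _ ≤ ENNReal.ofReal η := by
        rw [← ENNReal.ofReal_mul (by positivity)]
        exact ENNReal.ofReal_le_ofReal hAη

lemma ofReal_pPow [NeZero N] (hσ : 0 < σ) (h : N * σ ≤ 4) (U : H2 N) :
    ENNReal.ofReal (U.pPow σ) = ∫⁻ x, ENNReal.ofReal (‖U.toL2 x‖ ^ (2 * σ + 2)) := by
  rw [pPow_eq, ofReal_integral_eq_lintegral_ofReal (U.integrable_norm_rpow hσ h)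
    (ae_of_all _ fun x => by positivity)]

lemma ofReal_pPow_le_of_norm_lowFreq_le [NeZero N] {A ε : ℝ} (hσ : 0 < σ) (h : N * σ ≤ 4)
    (hε : 0 ≤ ε) (U : H2 N) (hlow : ∀ x, ‖lowFreq A U.toL2 x‖ ≤ ε) :
    ENNReal.ofReal (U.pPow σ) ≤ ENNReal.ofReal (2 ^ (2 * σ + 2)) *
        (∫⁻ x, ENNReal.ofReal (‖highFreq A U.toL2 x‖ ^ (2 * σ + 2))) +
      ENNReal.ofReal ((2 * ε) ^ (2 * σ)) * ENNReal.ofReal U.massSq := by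
  rw [ofReal_pPow hσ h, massSq_eq, ofReal_norm_sq_eq_lintegral,
    ← lintegral_const_mul' _ _ ENNReal.ofReal_ne_top,
    ← lintegral_const_mul' _ _ ENNReal.ofReal_ne_top,
    ← lintegral_add_right _ ((measurable_ofReal_norm_sq _).const_mul _)]
  refine lintegral_mono_ae ?_
  filter_upwards [lowFreq_add_highFreq A U.toL2] with x hx
  rw [← ENNReal.ofReal_mul (by positivity), ← ENNReal.ofReal_mul (by positivity),
    ← ENNReal.ofReal_add (by positivity) (by positivity)]
  refine ENNReal.ofReal_le_ofReal (rpow_le_of_le_add (norm_nonneg _) (norm_nonneg _) hε hσ.le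
    ?_ (hlow x))
  rw [hx]
  exact norm_add_le _ _

lemma exists_le_norm_lowFreq [NeZero N] (hσ : 0 < σ) (h : N * σ ≤ 4) {R δ : ℝ} (hR : 0 ≤ R)
    (hδ : 0 < δ) : ∃ A, ∃ ε > 0, ∀ U : H2 N, U.massSq ≤ R → U.lapSq ≤ R → δ ≤ U.pPow σ →
      ∃ x, ε ≤ ‖lowFreq A U.toL2 x‖ := by
  obtain ⟨A, -, hhigh⟩ := exists_lintegral_highFreq_le (N := N) hσ h hR
    (by positivity : 0 < δ / (2 * 2 ^ (2 * σ + 2)))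
  obtain ⟨ε, hε, hεδ⟩ : ∃ ε : ℝ, 0 < ε ∧ (2 * ε) ^ (2 * σ) = δ / (4 * (R + 1)) := by
    refine ⟨(δ / (4 * (R + 1))) ^ (2 * σ)⁻¹ / 2, by positivity, ?_⟩
    rw [mul_div_cancel₀ _ two_ne_zero, Real.rpow_inv_rpow (by positivity) (by positivity)]
  refine ⟨A, ε, hε, fun U hM hL hp => ?_⟩
  by_contra! hlow
  have hle : ENNReal.ofReal (U.pPow σ) ≤ ENNReal.ofReal (2 ^ (2 * σ + 2) *
      (δ / (2 * 2 ^ (2 * σ + 2))) + δ / (4 * (R + 1)) * R) := by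
    refine (U.ofReal_pPow_le_of_norm_lowFreq_le hσ h hε.le fun x => (hlow x).le).trans ?_
    rw [ENNReal.ofReal_add (by positivity) (by positivity), ENNReal.ofReal_mul (by positivity),
      ENNReal.ofReal_mul (by positivity), hεδ]
    gcongr
    exact hhigh U hM hL
  have hpPow := (ENNReal.ofReal_le_ofReal_iff (by positivity)).1 hle
  have hfirst : 2 ^ (2 * σ + 2) * (δ / (2 * 2 ^ (2 * σ + 2))) = δ / 2 := by field_simp
  have hsecond : δ / (4 * (R + 1)) * R ≤ δ / 4 := by
    rw [div_mul_eq_mul_div, div_le_div_iff₀ (by positivity) (by positivity)]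
    nlinarith
  linarith

end H2

/-! ### Weak convergence -/

section WeakTendsto

variable (𝕜 : Type*) {E : Type*} [RCLike 𝕜] [NormedAddCommGroup E] [InnerProductSpace 𝕜 E]

/-- Weak convergence of a sequence in an inner product space. -/
def WeakTendsto (f : ℕ → E) (g : E) : Prop :=
  ∀ a : E, Tendsto (fun n => inner 𝕜 a (f n)) atTop (𝓝 (inner 𝕜 a g))

variable {𝕜} {f : ℕ → E} {g : E}

lemma WeakTendsto.comp (h : WeakTendsto 𝕜 f g) {φ : ℕ → ℕ} (hφ : StrictMono φ) :
    WeakTendsto 𝕜 (f ∘ φ) g :=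
  fun a => (h a).comp hφ.tendsto_atTop

lemma WeakTendsto.sub_limit (h : WeakTendsto 𝕜 f g) : WeakTendsto 𝕜 (fun n => f n - g) 0 := by
  intro a
  simpa only [inner_sub_right, sub_self, inner_zero_right] using (h a).sub_const (inner 𝕜 a g)

lemma WeakTendsto.tendsto_norm_sq_sub (h : WeakTendsto 𝕜 f g) :
    Tendsto (fun n => ‖f n‖ ^ 2 - ‖f n - g‖ ^ 2) atTop (𝓝 (‖g‖ ^ 2)) := by
  have hre := (RCLike.continuous_re.tendsto _).comp (h g)
  rw [← norm_sq_eq_re_inner g] at hre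
  convert (hre.const_mul 2).sub_const (‖g‖ ^ 2) using 2 with n
  · rw [norm_sub_sq (𝕜 := 𝕜), inner_re_symm, Function.comp_apply]
    ring
  · ring

lemma exists_weakTendsto_subseq [CompleteSpace E] [TopologicalSpace.SeparableSpace E] {R : ℝ}
    (hf : ∀ n, ‖f n‖ ≤ R) : ∃ g, ∃ φ : ℕ → ℕ, StrictMono φ ∧ WeakTendsto 𝕜 (f ∘ φ) g := by
  have hcompact := WeakDual.isSeqCompact_closedBall 𝕜 E 0 R
  obtain ⟨ℓ, -, φ, hφ, hℓ⟩ := hcompact.subseq_of_frequently_in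
    (x := fun n => StrongDual.toWeakDual (InnerProductSpace.toDual 𝕜 E (f n)))
    (Frequently.of_forall fun n => mem_closedBall_zero_iff.2
      ((LinearIsometryEquiv.norm_map (InnerProductSpace.toDual 𝕜 E) (f n)).trans_le (hf n)))
  refine ⟨(InnerProductSpace.toDual 𝕜 E).symm (WeakDual.toStrongDual ℓ), φ, hφ, fun a => ?_⟩
  have hinner : Tendsto (fun n => inner 𝕜 (f (φ n)) a) atTop
      (𝓝 (inner 𝕜 ((InnerProductSpace.toDual 𝕜 E).symm (WeakDual.toStrongDual ℓ)) a)) := by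
    rw [InnerProductSpace.toDual_symm_apply]
    exact ((WeakDual.eval_continuous a).tendsto ℓ).comp hℓ
  simpa only [Function.comp_def, inner_conj_symm] using
    (RCLike.continuous_conj.tendsto _).comp hinner

lemma exists_forall_weakTendsto_subseq [CompleteSpace E] [TopologicalSpace.SeparableSpace E]
    {ι : Type*} [Finite ι] {f : ι → ℕ → E} {R : ℝ} (hf : ∀ i n, ‖f i n‖ ≤ R) :
    ∃ g : ι → E, ∃ φ : ℕ → ℕ, StrictMono φ ∧ ∀ i, WeakTendsto 𝕜 (f i ∘ φ) (g i) := by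
  classical
  have := Fintype.ofFinite ι
  suffices h : ∀ s : Finset ι, ∃ φ : ℕ → ℕ, StrictMono φ ∧
      ∀ i ∈ s, ∃ g, WeakTendsto 𝕜 (f i ∘ φ) g by
    obtain ⟨φ, hφ, h⟩ := h Finset.univ
    choose g hg using fun i => h i (Finset.mem_univ i)
    exact ⟨g, φ, hφ, hg⟩
  intro s
  induction s using Finset.induction_on with
  | empty => exact ⟨id, strictMono_id, by simp⟩
  | insert i s _ ih =>
    obtain ⟨φ, hφ, hs⟩ := ih
    obtain ⟨g, ψ, hψ, hg⟩ := exists_weakTendsto_subseq (𝕜 := 𝕜) (f := f i ∘ φ) fun n => hf i (φ n)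
    refine ⟨φ ∘ ψ, hφ.comp hψ, Finset.forall_mem_insert _ _ _ |>.2 ⟨⟨g, hg⟩, fun j hj => ?_⟩⟩
    obtain ⟨g', hg'⟩ := hs j hj
    exact ⟨g', hg'.comp hψ⟩

end WeakTendsto

/-! ### Local compactness -/

section LocalCompactness

lemma exists_isFiniteMeasure_le {α : Type*} [MeasurableSpace α] (μ : Measure α) [SigmaFinite μ] :
    ∃ ν : Measure α, IsFiniteMeasure ν ∧ ν ≤ μ ∧ μ ≪ ν := by
  obtain ⟨w, hw_pos, hw_meas, hw⟩ := exists_pos_lintegral_lt_of_sigmaFinite μ one_ne_zero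
  have hmeas : Measurable fun x => min (w x : ℝ≥0∞) 1 :=
    hw_meas.coe_nnreal_ennreal.min measurable_const
  refine ⟨μ.withDensity fun x => min (w x) 1, isFiniteMeasure_withDensity ?_, ?_, ?_⟩
  · exact ((lintegral_mono fun x => min_le_left _ _).trans_lt (hw.trans ENNReal.one_lt_top)).ne
  · calc μ.withDensity (fun x => min (w x) 1) ≤ μ.withDensity 1 :=
          withDensity_mono (ae_of_all _ fun x => min_le_right _ _)
      _ = μ := withDensity_one
  · refine withDensity_absolutelyContinuous' hmeas.aemeasurable (ae_of_all _ fun x => ?_)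
    simpa using (hw_pos x).ne'

variable {V : Type*} [NormedAddCommGroup V] [InnerProductSpace ℝ V] [FiniteDimensional ℝ V]
  [MeasurableSpace V] [BorelSpace V] {f : ℕ → L2Space V} {g : L2Space V}

lemma WeakTendsto.tendsto_lowFreq (h : WeakTendsto ℂ f g) (A : ℝ) (x : V) :
    Tendsto (fun n => lowFreq A (f n) x) atTop (𝓝 (lowFreq A g x)) := by
  have hinner (u : L2Space V) : lowFreq A u x =
      inner ℂ (𝓕⁻ ((memLp_truncatedWave A x).toLp _ : L2Space V)) u := by
    rw [← Lp.inner_fourier_eq, FourierTransform.fourier_fourierInv_eq, lowFreq]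
  simpa only [hinner] using h _

lemma lowFreq_zero (A : ℝ) (x : V) : lowFreq A (0 : L2Space V) x = 0 :=
  norm_le_zero_iff.1 ((norm_lowFreq_le A 0 x).trans_eq (by simp))

lemma aestronglyMeasurable_lowFreq (A : ℝ) (u : L2Space V) :
    AEStronglyMeasurable (lowFreq A u) volume := by
  refine ((Lp.aestronglyMeasurable u).sub (Lp.aestronglyMeasurable (highFreq A u))).congr ?_
  filter_upwards [lowFreq_add_highFreq A u] with x hx
  rw [Pi.sub_apply, hx, add_sub_cancel_right]

lemma WeakTendsto.tendstoInMeasure (h : WeakTendsto ℂ f 0)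
    (hhigh : ∀ η > 0, ∃ A, ∀ n, ‖highFreq A (f n)‖ ^ 2 ≤ η) {ν : Measure V} [IsFiniteMeasure ν]
    (hν : ν ≤ volume) : TendstoInMeasure ν (fun n => (f n : V → ℂ)) atTop 0 := by
  have hac : ν ≪ volume := Measure.absolutelyContinuous_of_le hν
  rw [tendstoInMeasure_iff_norm]
  intro s hs
  refine ENNReal.tendsto_nhds_zero.2 fun η hη => ?_
  obtain ⟨δ, hδ, hδη⟩ : ∃ δ : ℝ, 0 < δ ∧ ENNReal.ofReal δ ≤ η / 2 := by
    obtain ⟨δ, hδ, hδη⟩ := ENNReal.lt_iff_exists_nnreal_btwn.1 (ENNReal.half_pos hη.ne')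
    exact ⟨δ, by exact_mod_cast hδ, by simpa using hδη.le⟩
  obtain ⟨A, hA⟩ := hhigh (δ * (s / 2) ^ 2) (by positivity)
  have hlow : TendstoInMeasure ν (fun n => lowFreq A (f n)) atTop (fun _ => (0 : ℂ)) :=
    tendstoInMeasure_of_tendsto_ae (fun n => (aestronglyMeasurable_lowFreq A (f n)).mono_ac hac)
      (ae_of_all _ fun x => lowFreq_zero A x ▸ h.tendsto_lowFreq A x)
  filter_upwards [(tendstoInMeasure_iff_norm.1 hlow (s / 2) (by positivity)).eventually_le_const
    (ENNReal.half_pos hη.ne')] with n hn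
  have hhigh_le : ν {x | s / 2 ≤ ‖highFreq A (f n) x‖} ≤ η / 2 := by
    refine (hν _).trans ((measure_le_norm_le _ (by positivity)).trans (le_trans ?_ hδη))
    rw [← ENNReal.ofReal_mul (by positivity)]
    refine ENNReal.ofReal_le_ofReal ?_
    rw [one_div_mul_eq_div, div_le_iff₀ (by positivity)]
    exact hA n
  calc ν {x | s ≤ ‖f n x - (0 : V → ℂ) x‖}
      ≤ ν ({x | s / 2 ≤ ‖lowFreq A (f n) x - 0‖} ∪ {x | s / 2 ≤ ‖highFreq A (f n) x‖}) := by
        refine measure_mono_ae ?_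
        filter_upwards [hac.ae_le (lowFreq_add_highFreq A (f n))] with x hx
          (hsx : s ≤ ‖f n x - 0‖)
        rw [sub_zero, hx] at hsx
        change s / 2 ≤ ‖lowFreq A (f n) x - 0‖ ∨ s / 2 ≤ ‖highFreq A (f n) x‖
        rw [sub_zero]
        by_contra! hlt
        linarith [norm_add_le (lowFreq A (f n) x) (highFreq A (f n) x)]
    _ ≤ η / 2 + η / 2 := (measure_union_le _ _).trans (add_le_add hn hhigh_le)
    _ = η := ENNReal.add_halves η

lemma WeakTendsto.exists_subseq_tendsto_ae (h : WeakTendsto ℂ f 0)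
    (hhigh : ∀ η > 0, ∃ A, ∀ n, ‖highFreq A (f n)‖ ^ 2 ≤ η) :
    ∃ φ : ℕ → ℕ, StrictMono φ ∧ ∀ᵐ x, Tendsto (fun n => f (φ n) x) atTop (𝓝 0) := by
  obtain ⟨ν, _, hν, hac⟩ := exists_isFiniteMeasure_le (volume : Measure V)
  obtain ⟨φ, hφ, hae⟩ := (h.tendstoInMeasure hhigh hν).exists_seq_tendsto_ae
  exact ⟨φ, hφ, hac.ae_le hae⟩

end LocalCompactness

namespace H2

variable {N : ℕ}

/-- Weak convergence in `H²`: the functions, their gradients and their Laplacians converge weakly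
in `L²`. -/
structure WeakTendsto (V : ℕ → H2 N) (W : H2 N) : Prop where
  toL2 : _root_.WeakTendsto ℂ (fun n => (V n).toL2) W.toL2
  gradL2 : ∀ i, _root_.WeakTendsto ℂ (fun n => (V n).gradL2 i) (W.gradL2 i)
  laplL2 : _root_.WeakTendsto ℂ (fun n => (V n).laplL2) W.laplL2

namespace WeakTendsto

variable {V : ℕ → H2 N} {W : H2 N}

lemma comp (h : WeakTendsto V W) {φ : ℕ → ℕ} (hφ : StrictMono φ) : WeakTendsto (V ∘ φ) W :=
  ⟨h.toL2.comp hφ, fun i => (h.gradL2 i).comp hφ, h.laplL2.comp hφ⟩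

lemma tendsto_massSq_sub (h : WeakTendsto V W) :
    Tendsto (fun n => (V n).massSq - (V n - W).massSq) atTop (𝓝 W.massSq) := by
  simpa only [massSq_eq, toL2_sub] using h.toL2.tendsto_norm_sq_sub

lemma tendsto_gradSq_sub (h : WeakTendsto V W) :
    Tendsto (fun n => (V n).gradSq - (V n - W).gradSq) atTop (𝓝 W.gradSq) := by
  simpa only [gradSq_eq, gradL2_sub, ← Finset.sum_sub_distrib] using
    tendsto_finsetSum _ fun i _ => (h.gradL2 i).tendsto_norm_sq_sub

lemma tendsto_lapSq_sub (h : WeakTendsto V W) :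
    Tendsto (fun n => (V n).lapSq - (V n - W).lapSq) atTop (𝓝 W.lapSq) := by
  simpa only [lapSq_eq, laplL2_sub] using h.laplL2.tendsto_norm_sq_sub

end WeakTendsto

lemma gradSq_le_of_le {U : H2 N} {R : ℝ} (hM : U.massSq ≤ R) (hL : U.lapSq ≤ R) :
    U.gradSq ≤ R := by
  have hR : 0 ≤ R := U.massSq_nonneg.trans hM
  refine abs_le_of_sq_le_sq' ?_ hR |>.2
  calc U.gradSq ^ 2 ≤ U.massSq * U.lapSq := U.gradSq_sq_le
    _ ≤ R * R := by
      have := U.lapSq_nonneg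
      gcongr
    _ = R ^ 2 := (sq R).symm

lemma exists_weakTendsto_subseq {V : ℕ → H2 N} {R : ℝ} (hM : ∀ n, (V n).massSq ≤ R)
    (hL : ∀ n, (V n).lapSq ≤ R) : ∃ W, ∃ φ : ℕ → ℕ, StrictMono φ ∧ WeakTendsto (V ∘ φ) W := by
  have : Fact ((2 : ℝ≥0∞) ≠ ⊤) := ⟨ENNReal.ofNat_ne_top⟩
  let F : Option (Option (Fin N)) → ℕ → L2Space (Esp N) := fun o n =>
    o.elim (V n).toL2 fun o => o.elim (V n).laplL2 (V n).gradL2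
  have hF (o n) : ‖F o n‖ ≤ √R := by
    refine Real.le_sqrt_of_sq_le ?_
    match o with
    | none => exact (V n).massSq_eq ▸ hM n
    | some none => exact (V n).lapSq_eq ▸ hL n
    | some (some i) =>
      refine le_trans ?_ (gradSq_le_of_le (hM n) (hL n))
      rw [gradSq_eq]
      exact Finset.single_le_sum (f := fun i => ‖(V n).gradL2 i‖ ^ 2)
        (fun i _ => by positivity) (Finset.mem_univ i)
  obtain ⟨G, φ, hφ, h⟩ := exists_forall_weakTendsto_subseq (𝕜 := ℂ) hF
  have hu : _root_.WeakTendsto ℂ (fun n => (V (φ n)).toL2) (G none) := h none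
  have hl : _root_.WeakTendsto ℂ (fun n => (V (φ n)).laplL2) (G (some none)) := h (some none)
  have hg (i) : _root_.WeakTendsto ℂ (fun n => (V (φ n)).gradL2 i) (G (some (some i))) :=
    h (some (some i))
  have hgrad (i) : IsWeakDiv (Pi.single i (G none)) (G (some (some i))) := by
    refine isWeakDiv_of_tendsto_inner (fun n => (V (φ n)).isWeakDiv_gradL2 i) (fun j a => ?_) (hg i)
    rcases eq_or_ne j i with rfl | hji
    · simpa only [Pi.single_eq_same] using hu a
    · simp only [Pi.single_eq_of_ne hji, inner_zero_right, tendsto_const_nhds]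
  have hlapl : IsWeakDiv (fun i => G (some (some i))) (G (some none)) :=
    isWeakDiv_of_tendsto_inner (fun n => (V (φ n)).isWeakDiv_laplL2) hg hl
  exact ⟨ofL2 _ _ _ hgrad hlapl, φ, hφ, by simpa using hu, by simpa using hg, by simpa using hl⟩

lemma lapSq_sub_le (U W : H2 N) : (U - W).lapSq ≤ 2 * (U.lapSq + W.lapSq) := by
  simp only [lapSq_eq, laplL2_sub, sq]
  linarith [parallelogram_law_with_norm ℂ U.laplL2 W.laplL2,
    mul_self_nonneg ‖U.laplL2 + W.laplL2‖]

lemma exists_norm_sq_highFreq_le {U : ℕ → H2 N} {R : ℝ} (hL : ∀ n, (U n).lapSq ≤ R) {η : ℝ}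
    (hη : 0 < η) : ∃ A, ∀ n, ‖highFreq A (U n).toL2‖ ^ 2 ≤ η := by
  obtain ⟨A, hAη, hA⟩ := (((tendsto_div_two_pi_mul_pow R).eventually_le_const hη).and
    (eventually_gt_atTop 0)).exists
  refine ⟨A, fun n => ((U n).norm_sq_highFreq_le hA).trans (le_trans ?_ hAη)⟩
  gcongr
  exact hL n

lemma exists_weakTendsto_tendsto_ae_subseq {V : ℕ → H2 N} {R : ℝ} (hM : ∀ n, (V n).massSq ≤ R)
    (hL : ∀ n, (V n).lapSq ≤ R) : ∃ W, ∃ φ : ℕ → ℕ, StrictMono φ ∧ WeakTendsto (V ∘ φ) W ∧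
      ∀ᵐ x, Tendsto (fun n => (V (φ n) - W).toL2 x) atTop (𝓝 0) := by
  obtain ⟨W, φ, hφ, hweak⟩ := exists_weakTendsto_subseq hM hL
  have hsub : _root_.WeakTendsto ℂ (fun n => (V (φ n) - W).toL2) 0 := by
    simpa only [toL2_sub, Function.comp_apply] using hweak.toL2.sub_limit
  have hlapl (n) : (V (φ n) - W).lapSq ≤ 2 * (R + W.lapSq) :=
    (lapSq_sub_le _ _).trans (by gcongr; exact hL (φ n))
  obtain ⟨ψ, hψ, hae⟩ := hsub.exists_subseq_tendsto_ae fun η hη =>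
    exists_norm_sq_highFreq_le hlapl hη
  exact ⟨W, φ ∘ ψ, hφ.comp hψ, hweak.comp hψ, hae⟩

end H2

/-! ### The Brezis–Lieb lemma -/

section BrezisLieb

lemma exists_add_rpow_le {p ε : ℝ} (hp : 0 ≤ p) (hε : 0 < ε) : ∃ C : ℝ, 0 ≤ C ∧
    ∀ x y : ℝ, 0 ≤ x → 0 ≤ y → (x + y) ^ p ≤ (1 + ε) * x ^ p + C * y ^ p := by
  obtain ⟨η, hηε, hη⟩ : ∃ η : ℝ, (1 + η) ^ p < 1 + ε ∧ 0 < η := by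
    have hlim : Tendsto (fun η : ℝ => (1 + η) ^ p) (𝓝[>] 0) (𝓝 ((1 + 0) ^ p)) :=
      (((continuous_const.add continuous_id).tendsto (0 : ℝ)).rpow_const (Or.inr hp)).mono_left
        nhdsWithin_le_nhds
    rw [add_zero, Real.one_rpow] at hlim
    exact ((hlim.eventually_lt_const (by linarith)).and self_mem_nhdsWithin).exists
  refine ⟨(1 + 1 / η) ^ p, by positivity, fun x y hx hy => ?_⟩
  rcases le_total y (η * x) with hyx | hyx
  · calc (x + y) ^ p ≤ ((1 + η) * x) ^ p := by gcongr; linarith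
      _ = (1 + η) ^ p * x ^ p := Real.mul_rpow (by positivity) hx
      _ ≤ (1 + ε) * x ^ p := by gcongr
      _ ≤ _ := le_add_of_nonneg_right (by positivity)
  · have hxy : x ≤ 1 / η * y := by rwa [one_div_mul_eq_div, le_div_iff₀' hη]
    calc (x + y) ^ p ≤ ((1 + 1 / η) * y) ^ p := by gcongr; linarith
      _ = (1 + 1 / η) ^ p * y ^ p := Real.mul_rpow (by positivity) hy
      _ ≤ _ := le_add_of_nonneg_left (by positivity)

variable {E : Type*} [NormedAddCommGroup E]

lemma exists_abs_norm_add_rpow_sub_le {p ε : ℝ} (hp : 0 ≤ p) (hε : 0 < ε) : ∃ C : ℝ, 0 ≤ C ∧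
    ∀ a b : E, |‖a + b‖ ^ p - ‖a‖ ^ p| ≤ ε * ‖a‖ ^ p + C * ‖b‖ ^ p := by
  have hδ : 0 < min (ε / 2) 1 := by positivity
  set δ := min (ε / 2) 1
  have hδε : δ ≤ ε / 2 := min_le_left _ _
  have hδ1 : δ ≤ 1 := min_le_right _ _
  obtain ⟨C, hC, h⟩ := exists_add_rpow_le hp hδ
  have hadd (a b : E) : ‖a + b‖ ^ p ≤ (1 + δ) * ‖a‖ ^ p + C * ‖b‖ ^ p :=
    (Real.rpow_le_rpow (norm_nonneg _) (norm_add_le a b) hp).trans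
      (h _ _ (norm_nonneg _) (norm_nonneg _))
  refine ⟨2 * C, by positivity, fun a b => abs_sub_le_iff.2 ⟨?_, ?_⟩⟩
  · have ha : 0 ≤ ‖a‖ ^ p := by positivity
    have hb : 0 ≤ C * ‖b‖ ^ p := by positivity
    nlinarith [hadd a b]
  · have hsub : ‖a‖ ^ p ≤ (1 + δ) * ‖a + b‖ ^ p + C * ‖b‖ ^ p := by
      simpa using hadd (a + b) (-b)
    calc ‖a‖ ^ p - ‖a + b‖ ^ p ≤ δ * ‖a + b‖ ^ p + C * ‖b‖ ^ p := by linarith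
      _ ≤ δ * ((1 + δ) * ‖a‖ ^ p + C * ‖b‖ ^ p) + C * ‖b‖ ^ p := by gcongr; exact hadd a b
      _ = δ * (1 + δ) * ‖a‖ ^ p + δ * (C * ‖b‖ ^ p) + C * ‖b‖ ^ p := by ring
      _ ≤ ε * ‖a‖ ^ p + 1 * (C * ‖b‖ ^ p) + C * ‖b‖ ^ p := by gcongr; nlinarith
      _ = ε * ‖a‖ ^ p + 2 * C * ‖b‖ ^ p := by ring

variable {α : Type*} [MeasurableSpace α] {μ : Measure α} {p : ℝ} {r : ℕ → α → E} {g : α → E}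

lemma tendsto_integral_max_abs_sub (hp : 0 < p) {ε : ℝ} (hε : 0 < ε)
    (hr : ∀ n, Integrable (fun x => ‖r n x‖ ^ p) μ) (hg : Integrable (fun x => ‖g x‖ ^ p) μ)
    (hrg : ∀ n, Integrable (fun x => ‖r n x + g x‖ ^ p) μ)
    (hae : ∀ᵐ x ∂μ, Tendsto (fun n => r n x) atTop (𝓝 0)) :
    Tendsto (fun n => ∫ x, max (|‖r n x + g x‖ ^ p - ‖r n x‖ ^ p - ‖g x‖ ^ p| -
      ε * ‖r n x‖ ^ p) 0 ∂μ) atTop (𝓝 0) := by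
  obtain ⟨C, hC, h⟩ := exists_abs_norm_add_rpow_sub_le (E := E) hp.le hε
  suffices hlim : Tendsto (fun n => ∫ x, max (|‖r n x + g x‖ ^ p - ‖r n x‖ ^ p - ‖g x‖ ^ p| -
      ε * ‖r n x‖ ^ p) 0 ∂μ) atTop (𝓝 (∫ _, (0 : ℝ) ∂μ)) by rwa [integral_zero] at hlim
  refine tendsto_integral_of_dominated_convergence (fun x => (C + 1) * ‖g x‖ ^ p)
    (fun n => ((((hrg n).sub (hr n)).sub hg).abs.sub ((hr n).const_mul ε)).pos_part.1)
    (hg.const_mul _) (fun n => ae_of_all _ fun x => ?_) ?_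
  · have hgx : 0 ≤ ‖g x‖ ^ p := by positivity
    rw [Real.norm_of_nonneg (le_max_right _ _)]
    refine max_le ?_ (by positivity)
    calc |‖r n x + g x‖ ^ p - ‖r n x‖ ^ p - ‖g x‖ ^ p| - ε * ‖r n x‖ ^ p
        ≤ |‖r n x + g x‖ ^ p - ‖r n x‖ ^ p| + |‖g x‖ ^ p| - ε * ‖r n x‖ ^ p := by
          gcongr
          exact abs_sub _ _
      _ ≤ (C + 1) * ‖g x‖ ^ p := by
          rw [abs_of_nonneg hgx]
          linarith [h (r n x) (g x)]
  · filter_upwards [hae] with x hx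
    have hrx : Tendsto (fun n => ‖r n x‖ ^ p) atTop (𝓝 0) := by
      simpa [Real.zero_rpow hp.ne'] using hx.norm.rpow_const (p := p) (Or.inr hp.le)
    have hrgx : Tendsto (fun n => ‖r n x + g x‖ ^ p) atTop (𝓝 (‖g x‖ ^ p)) := by
      simpa using (hx.add_const (g x)).norm.rpow_const (p := p) (Or.inr hp.le)
    simpa using ((((hrgx.sub hrx).sub_const (‖g x‖ ^ p)).abs).sub (hrx.const_mul ε)).max
      (tendsto_const_nhds (x := (0 : ℝ)))

lemma tendsto_integral_norm_add_rpow_sub (hp : 0 < p)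
    (hr : ∀ n, Integrable (fun x => ‖r n x‖ ^ p) μ) (hg : Integrable (fun x => ‖g x‖ ^ p) μ)
    (hrg : ∀ n, Integrable (fun x => ‖r n x + g x‖ ^ p) μ)
    (hae : ∀ᵐ x ∂μ, Tendsto (fun n => r n x) atTop (𝓝 0)) {R : ℝ}
    (hR : ∀ n, ∫ x, ‖r n x‖ ^ p ∂μ ≤ R) :
    Tendsto (fun n => ∫ x, ‖r n x + g x‖ ^ p ∂μ - ∫ x, ‖r n x‖ ^ p ∂μ) atTop
      (𝓝 (∫ x, ‖g x‖ ^ p ∂μ)) := by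
  have hR0 : 0 ≤ R := (integral_nonneg fun x => by positivity).trans (hR 0)
  refine Metric.tendsto_nhds.2 fun η hη => ?_
  obtain ⟨ε, hε, hεη⟩ : ∃ ε : ℝ, 0 < ε ∧ ε * R < η / 2 := by
    refine ⟨η / 2 / (R + 1), by positivity, ?_⟩
    rw [div_mul_eq_mul_div, div_lt_iff₀ (by positivity)]
    nlinarith
  filter_upwards [(tendsto_integral_max_abs_sub hp hε hr hg hrg hae).eventually_lt_const
    (half_pos hη)] with n hn
  have hsub : Integrable (fun x => ‖r n x + g x‖ ^ p - ‖r n x‖ ^ p) μ := (hrg n).sub (hr n)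
  have hdiff : Integrable (fun x => ‖r n x + g x‖ ^ p - ‖r n x‖ ^ p - ‖g x‖ ^ p) μ := hsub.sub hg
  have hmax : Integrable (fun x => max (|‖r n x + g x‖ ^ p - ‖r n x‖ ^ p - ‖g x‖ ^ p| -
    ε * ‖r n x‖ ^ p) 0) μ := (hdiff.abs.sub ((hr n).const_mul ε)).pos_part
  calc dist (∫ x, ‖r n x + g x‖ ^ p ∂μ - ∫ x, ‖r n x‖ ^ p ∂μ) (∫ x, ‖g x‖ ^ p ∂μ)
      = |∫ x, (‖r n x + g x‖ ^ p - ‖r n x‖ ^ p - ‖g x‖ ^ p) ∂μ| := by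
        rw [Real.dist_eq, ← integral_sub (hrg n) (hr n), ← integral_sub hsub hg]
    _ ≤ ∫ x, |‖r n x + g x‖ ^ p - ‖r n x‖ ^ p - ‖g x‖ ^ p| ∂μ := abs_integral_le_integral_abs
    _ ≤ ∫ x, (max (|‖r n x + g x‖ ^ p - ‖r n x‖ ^ p - ‖g x‖ ^ p| - ε * ‖r n x‖ ^ p) 0 +
          ε * ‖r n x‖ ^ p) ∂μ :=
        integral_mono hdiff.abs (hmax.add ((hr n).const_mul ε)) fun x =>
          sub_le_iff_le_add.1 (le_max_left _ _)
    _ = ∫ x, max (|‖r n x + g x‖ ^ p - ‖r n x‖ ^ p - ‖g x‖ ^ p| - ε * ‖r n x‖ ^ p) 0 ∂μ +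
          ε * ∫ x, ‖r n x‖ ^ p ∂μ := by
        rw [integral_add hmax ((hr n).const_mul ε), integral_const_mul]
    _ < η / 2 + η / 2 := add_lt_add hn ((mul_le_mul_of_nonneg_left (hR n) hε.le).trans_lt hεη)
    _ = η := add_halves η

end BrezisLieb

/-! ### Energy splitting and the dichotomy -/

namespace H2

variable {N : ℕ} {σ R m e : ℝ} {V : ℕ → H2 N} {W : H2 N}

lemma massSq_sub_le (U W : H2 N) : (U - W).massSq ≤ 2 * (U.massSq + W.massSq) := by
  simp only [massSq_eq, toL2_sub, sq]
  linarith [parallelogram_law_with_norm ℂ U.toL2 W.toL2, mul_self_nonneg ‖U.toL2 + W.toL2‖]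

lemma tendsto_gradSq_of_tendsto_massSq (hL : ∀ n, (V n).lapSq ≤ R)
    (hM : Tendsto (fun n => (V n).massSq) atTop (𝓝 0)) :
    Tendsto (fun n => (V n).gradSq) atTop (𝓝 0) := by
  have hle (n : ℕ) : ‖(V n).gradSq‖ ≤ √((V n).massSq * R) := by
    refine Real.le_sqrt_of_sq_le ?_
    rw [Real.norm_eq_abs, sq_abs]
    exact (V n).gradSq_sq_le.trans (mul_le_mul_of_nonneg_left (hL n) (V n).massSq_nonneg)
  refine squeeze_zero_norm hle ?_
  simpa using (hM.mul_const R).sqrt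

lemma energy_sqrt_smul {s : ℝ} (hs : 0 ≤ s) (W : H2 N) :
    (√s • W).energy σ =
      s * (W.lapSq - 2 * W.gradSq) - s ^ (σ + 1) * (1 / (σ + 1) * W.pPow σ) := by
  have hpow : |√s| ^ (2 * σ + 2) = s ^ (σ + 1) := by
    rw [abs_of_nonneg (Real.sqrt_nonneg s), Real.sqrt_eq_rpow, ← Real.rpow_mul hs]
    ring_nf
  rw [energy, lapSq_smul, gradSq_smul, pPow_smul, hpow, Real.sq_sqrt hs]
  ring

variable [NeZero N]

lemma exists_pPow_le_mul_lapSq_add_massSq (hσ : 0 < σ) (h : N * σ ≤ 4) : ∃ C : ℝ, 0 ≤ C ∧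
    ∀ U : H2 N, U.pPow σ ≤ C * U.massSq ^ σ * (U.lapSq + U.massSq) := by
  obtain ⟨C, hC, hGN⟩ := exists_pPow_le (N := N) hσ
  refine ⟨C, hC, fun U => ?_⟩
  simpa only [one_mul] using hGN 1 1 zero_le_one zero_le_one
    (fun t ht => rpow_le_one_mul_rpow_add_one (by positivity) h ht) U

lemma tendsto_pPow_of_tendsto_massSq (hσ : 0 < σ) (h : N * σ ≤ 4) (hL : ∀ n, (V n).lapSq ≤ R)
    (hM : Tendsto (fun n => (V n).massSq) atTop (𝓝 0)) :
    Tendsto (fun n => (V n).pPow σ) atTop (𝓝 0) := by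
  obtain ⟨C, hC, hGN⟩ := exists_pPow_le_mul_lapSq_add_massSq (N := N) hσ h
  have hle (n : ℕ) : (V n).pPow σ ≤ C * (V n).massSq ^ σ * (R + (V n).massSq) := by
    have hVn := (V n).massSq_nonneg
    refine (hGN (V n)).trans ?_
    gcongr
    exact hL n
  refine squeeze_zero (fun n => (V n).pPow_nonneg) hle ?_
  simpa [Real.zero_rpow hσ.ne'] using
    ((hM.rpow_const (p := σ) (Or.inr hσ.le)).const_mul C).mul (hM.const_add R)

lemma tendsto_pPow_sub (hσ : 0 < σ) (h : N * σ ≤ 4) (hM : ∀ n, (V n).massSq ≤ R)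
    (hL : ∀ n, (V n).lapSq ≤ R)
    (hae : ∀ᵐ x, Tendsto (fun n => (V n - W).toL2 x) atTop (𝓝 0)) :
    Tendsto (fun n => (V n).pPow σ - (V n - W).pPow σ) atTop (𝓝 (W.pPow σ)) := by
  obtain ⟨C, hC, hGN⟩ := exists_pPow_le_mul_lapSq_add_massSq (N := N) hσ h
  have hbound (n : ℕ) : (V n - W).pPow σ ≤ C * (2 * (R + W.massSq)) ^ σ *
      (2 * (R + W.lapSq) + 2 * (R + W.massSq)) := by
    have hmass : (V n - W).massSq ≤ 2 * (R + W.massSq) :=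
      (massSq_sub_le _ _).trans (by gcongr; exact hM n)
    have hlap : (V n - W).lapSq ≤ 2 * (R + W.lapSq) :=
      (lapSq_sub_le _ _).trans (by gcongr; exact hL n)
    have hmass0 := (V n - W).massSq_nonneg
    have hlap0 := (V n - W).lapSq_nonneg
    have hR0 := hmass0.trans hmass
    refine (hGN _).trans ?_
    gcongr
  have hadd (n : ℕ) : (fun x => ‖(V n - W).toL2 x + W.toL2 x‖ ^ (2 * σ + 2)) =ᵐ[volume]
      fun x => ‖(V n).toL2 x‖ ^ (2 * σ + 2) := by
    rw [toL2_sub]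
    filter_upwards [Lp.coeFn_sub (V n).toL2 W.toL2] with x hx
    rw [hx, Pi.sub_apply, sub_add_cancel]
  simp only [pPow_eq] at hbound ⊢
  simp only [← integral_congr_ae (hadd _)]
  exact tendsto_integral_norm_add_rpow_sub (by positivity) (fun n => integrable_norm_rpow hσ h _)
    (integrable_norm_rpow hσ h W)
    (fun n => (integrable_norm_rpow hσ h (V n)).congr (hadd n).symm) hae hbound

lemma WeakTendsto.tendsto_energy_sub (hVW : WeakTendsto V W) (hσ : 0 < σ) (h : N * σ ≤ 4)
    (hM : ∀ n, (V n).massSq ≤ R) (hL : ∀ n, (V n).lapSq ≤ R)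
    (hae : ∀ᵐ x, Tendsto (fun n => (V n - W).toL2 x) atTop (𝓝 0)) :
    Tendsto (fun n => (V n).energy σ - (V n - W).energy σ) atTop (𝓝 (W.energy σ)) := by
  refine ((hVW.tendsto_lapSq_sub.sub (hVW.tendsto_gradSq_sub.const_mul 2)).sub
    ((tendsto_pPow_sub hσ h hM hL hae).const_mul (1 / (σ + 1)))).congr fun n => ?_
  simp only [energy]
  ring

lemma pPow_pos (hσ : 0 < σ) (h : N * σ ≤ 4) {U : H2 N} (hU : 0 < U.massSq) : 0 < U.pPow σ := by
  refine U.pPow_nonneg.lt_of_ne' fun hzero => hU.ne' ?_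
  rw [pPow_eq, integral_eq_zero_iff_of_nonneg (fun x => by positivity)
    (integrable_norm_rpow hσ h U)] at hzero
  rw [massSq_eq, sq_eq_zero_iff, norm_eq_zero, Lp.eq_zero_iff_ae_eq_zero]
  filter_upwards [hzero] with x hx
  exact norm_eq_zero.1 ((Real.rpow_eq_zero (norm_nonneg _) (by positivity)).1 hx)

lemma div_mul_lt_energy (hσ : 0 < σ) (h : N * σ ≤ 4)
    (hE : ∀ U : H2 N, U.massSq = m → e ≤ U.energy σ) (hW : 0 < W.massSq) (hWm : W.massSq < m) :
    W.massSq / m * e < W.energy σ := by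
  have hm : 0 < m := hW.trans hWm
  have hs : 1 < m / W.massSq := (one_lt_div hW).2 hWm
  have hs0 : 0 < m / W.massSq := by positivity
  have hpow : m / W.massSq < (m / W.massSq) ^ (σ + 1) :=
    Real.self_lt_rpow_of_one_lt hs (by linarith)
  have hpPow : 0 < 1 / (σ + 1) * W.pPow σ := mul_pos (by positivity) (pPow_pos hσ h hW)
  have hmass : (√(m / W.massSq) • W).massSq = m := by
    rw [massSq_smul, Real.sq_sqrt hs0.le, div_mul_cancel₀ _ hW.ne']
  have hlt : e < m / W.massSq * W.energy σ := calc
    e ≤ (√(m / W.massSq) • W).energy σ := hE _ hmass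
    _ = m / W.massSq * (W.lapSq - 2 * W.gradSq) -
        (m / W.massSq) ^ (σ + 1) * (1 / (σ + 1) * W.pPow σ) := energy_sqrt_smul hs0.le W
    _ < m / W.massSq * (W.lapSq - 2 * W.gradSq) - m / W.massSq * (1 / (σ + 1) * W.pPow σ) := by
        gcongr
    _ = m / W.massSq * W.energy σ := by rw [energy]; ring
  rw [div_mul_eq_mul_div, div_lt_iff₀ hm, mul_comm (W.energy σ)]
  rwa [div_mul_eq_mul_div, lt_div_iff₀ hW, mul_comm e] at hlt

lemma WeakTendsto.massSq_eq_of_tendsto_energy (hVW : WeakTendsto V W) (hσ : 0 < σ) (h : N * σ ≤ 4)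
    (hE : ∀ U : H2 N, U.massSq = m → e ≤ U.energy σ)
    (hsplit : Tendsto (fun n => (V n).energy σ - (V n - W).energy σ) atTop (𝓝 (W.energy σ)))
    (hmass : Tendsto (fun n => (V n).massSq) atTop (𝓝 m))
    (henergy : Tendsto (fun n => (V n).energy σ) atTop (𝓝 e)) (hW : 0 < W.massSq) :
    W.massSq = m := by
  have hr : Tendsto (fun n => (V n - W).massSq) atTop (𝓝 (m - W.massSq)) := by
    simpa only [sub_sub_cancel] using hmass.sub hVW.tendsto_massSq_sub
  have hrE : Tendsto (fun n => (V n - W).energy σ) atTop (𝓝 (e - W.energy σ)) := by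
    simpa only [sub_sub_cancel] using henergy.sub hsplit
  have hWm : W.massSq ≤ m := sub_nonneg.1 (ge_of_tendsto' hr fun n => (V n - W).massSq_nonneg)
  refine hWm.eq_of_not_lt fun hlt => ?_
  have hlimit : (m - W.massSq) / m * e ≤ e - W.energy σ := by
    refine le_of_tendsto_of_tendsto ((hr.div_const m).mul_const e) hrE ?_
    filter_upwards [hr.eventually_const_lt (sub_pos.2 hlt),
      hr.eventually_lt_const (sub_lt_self m hW)] with n hpos hltm
    exact (div_mul_lt_energy hσ h hE hpos hltm).le
  have hstrict := div_mul_lt_energy hσ h hE hW hlt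
  rw [sub_div, div_self (hW.trans hlt).ne', sub_mul, one_mul] at hlimit
  linarith

lemma WeakTendsto.tendsto_h2NormSq_sub (hVW : WeakTendsto V W) (hσ : 0 < σ) (h : N * σ ≤ 4)
    (hL : ∀ n, (V n).lapSq ≤ R)
    (hsplit : Tendsto (fun n => (V n).energy σ - (V n - W).energy σ) atTop (𝓝 (W.energy σ)))
    (hmass : Tendsto (fun n => (V n).massSq) atTop (𝓝 W.massSq))
    (henergy : Tendsto (fun n => (V n).energy σ) atTop (𝓝 e)) (he : e ≤ W.energy σ) :
    W.energy σ = e ∧ Tendsto (fun n => (V n - W).h2NormSq) atTop (𝓝 0) := by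
  have hrL (n : ℕ) : (V n - W).lapSq ≤ 2 * (R + W.lapSq) :=
    (lapSq_sub_le _ _).trans (by gcongr; exact hL n)
  have hrM : Tendsto (fun n => (V n - W).massSq) atTop (𝓝 0) := by
    simpa only [sub_sub_cancel, sub_self] using hmass.sub hVW.tendsto_massSq_sub
  have hrG := tendsto_gradSq_of_tendsto_massSq hrL hrM
  have hrE : Tendsto (fun n => (V n - W).energy σ) atTop (𝓝 (e - W.energy σ)) := by
    simpa only [sub_sub_cancel] using henergy.sub hsplit
  have hlap : Tendsto (fun n => (V n - W).lapSq) atTop (𝓝 (e - W.energy σ)) := by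
    have hsum := (hrE.add (hrG.const_mul 2)).add
      ((tendsto_pPow_of_tendsto_massSq hσ h hrL hrM).const_mul (1 / (σ + 1)))
    rw [mul_zero, mul_zero, add_zero, add_zero] at hsum
    refine hsum.congr fun n => ?_
    rw [energy]
    ring
  have hWe : W.energy σ = e :=
    (sub_nonneg.1 (ge_of_tendsto' hlap fun n => (V n - W).lapSq_nonneg)).antisymm he
  refine ⟨hWe, ?_⟩
  rw [hWe, sub_self] at hlap
  simpa only [h2NormSq, add_zero] using (hrM.add hrG).add hlap

end H2

/-! ### Minimizing sequences -/

section StrongConvergence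

lemma tendsto_eLpNorm_of_tendsto_norm_sq {α E : Type*} [MeasurableSpace α] {μ : Measure α}
    [NormedAddCommGroup E] {F : ℕ → Lp E 2 μ} {f : ℕ → α → E} (hF : ∀ n, F n =ᵐ[μ] f n)
    (h : Tendsto (fun n => ‖F n‖ ^ 2) atTop (𝓝 0)) :
    Tendsto (fun n => eLpNorm (f n) 2 μ) atTop (𝓝 0) := by
  have hnorm : Tendsto (fun n => ‖F n‖) atTop (𝓝 0) := by
    simpa only [Real.sqrt_sq (norm_nonneg _), Real.sqrt_zero] using h.sqrt
  have henorm := (continuous_enorm.tendsto 0).comp (tendsto_zero_iff_norm_tendsto_zero.2 hnorm)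
  rw [enorm_zero] at henorm
  exact henorm.congr fun n => (Lp.enorm_def (F n)).trans (eLpNorm_congr_ae (hF n))

lemma coeFn_translateL2_sub {V : Type*} [NormedAddCommGroup V] [InnerProductSpace ℝ V]
    [FiniteDimensional ℝ V] [MeasurableSpace V] [BorelSpace V] {f g : L2Space V} {u v : V → ℂ}
    (hf : f =ᵐ[volume] u) (hg : g =ᵐ[volume] v) (a : V) :
    (translateL2 a f - g : L2Space V) =ᵐ[volume] fun x => u (x + a) - v x := by
  filter_upwards [Lp.coeFn_sub (translateL2 a f) g, coeFn_translateL2 a f, hg,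
    (quasiMeasurePreserving_add_right volume a).ae_eq_comp hf] with x hsub htrans hgx hfx
  rw [hsub, Pi.sub_apply, htrans, hgx]
  exact congrArg (· - v x) hfx

variable {N : ℕ}

lemma H2.gradSq_nonneg (U : H2 N) : 0 ≤ U.gradSq :=
  U.gradSq_eq ▸ Finset.sum_nonneg fun _ _ => sq_nonneg _

lemma H2.norm_toL2_sq_le_h2NormSq (U : H2 N) : ‖U.toL2‖ ^ 2 ≤ U.h2NormSq := by
  rw [← U.massSq_eq, h2NormSq]
  linarith [U.gradSq_nonneg, U.lapSq_nonneg]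

lemma H2.norm_gradL2_sq_le_h2NormSq (U : H2 N) (i : Fin N) : ‖U.gradL2 i‖ ^ 2 ≤ U.h2NormSq := by
  have hi : ‖U.gradL2 i‖ ^ 2 ≤ U.gradSq := U.gradSq_eq ▸
    Finset.single_le_sum (f := fun i => ‖U.gradL2 i‖ ^ 2) (fun _ _ => sq_nonneg _)
      (Finset.mem_univ i)
  rw [h2NormSq]
  linarith [U.massSq_nonneg, U.lapSq_nonneg]

lemma H2.norm_laplL2_sq_le_h2NormSq (U : H2 N) : ‖U.laplL2‖ ^ 2 ≤ U.h2NormSq := by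
  rw [← U.lapSq_eq, h2NormSq]
  linarith [U.massSq_nonneg, U.gradSq_nonneg]

lemma h2TendstoTrans_of_tendsto_h2NormSq {u : ℕ → H2 N} {xs : ℕ → Esp N} {U : H2 N}
    (h : Tendsto (fun n => ((u n).shift (xs n) - U).h2NormSq) atTop (𝓝 0)) :
    H2TendstoTrans u xs U :=
  ⟨tendsto_eLpNorm_of_tendsto_norm_sq
      (fun n => coeFn_translateL2_sub (u n).coeFn_toL2 U.coeFn_toL2 (xs n)) <|
      squeeze_zero (fun n => sq_nonneg _)
        (fun n => by simpa using ((u n).shift (xs n) - U).norm_toL2_sq_le_h2NormSq) h,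
    fun i => tendsto_eLpNorm_of_tendsto_norm_sq
      (fun n => coeFn_translateL2_sub ((u n).coeFn_gradL2 i) (U.coeFn_gradL2 i) (xs n)) <|
      squeeze_zero (fun n => sq_nonneg _)
        (fun n => by simpa using ((u n).shift (xs n) - U).norm_gradL2_sq_le_h2NormSq i) h,
    tendsto_eLpNorm_of_tendsto_norm_sq
      (fun n => coeFn_translateL2_sub (u n).coeFn_laplL2 U.coeFn_laplL2 (xs n)) <|
      squeeze_zero (fun n => sq_nonneg _)
        (fun n => by simpa using ((u n).shift (xs n) - U).norm_laplL2_sq_le_h2NormSq) h⟩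

end StrongConvergence

section Infimum

variable {N : ℕ} {σ m b e : ℝ}

lemma exists_EminE_eq_coe (hb : ∀ U : H2 N, U.massSq = m → b ≤ U.energy σ)
    (htop : EminE N σ m < ⊤) : ∃ e : ℝ, EminE N σ m = e := by
  have hle : (b : EReal) ≤ EminE N σ m :=
    le_iInf₂ fun U hU => EReal.coe_le_coe_iff.2 (hb U hU)
  exact ⟨_, (EReal.coe_toReal htop.ne ((EReal.bot_lt_coe b).trans_le hle).ne').symm⟩

lemma le_energy_of_EminE_eq (he : EminE N σ m = e) {U : H2 N} (hU : U.massSq = m) :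
    e ≤ U.energy σ :=
  EReal.coe_le_coe_iff.1 (he ▸ iInf₂_le U hU)

lemma exists_tendsto_EminE (htop : EminE N σ m < ⊤) : ∃ u : ℕ → H2 N,
    (∀ n, (u n).massSq = m) ∧
      Tendsto (fun n => (((u n).energy σ : ℝ) : EReal)) atTop (𝓝 (EminE N σ m)) := by
  have hne : ((fun U : H2 N => (U.energy σ : EReal)) '' {U | U.massSq = m}).Nonempty := by
    obtain ⟨U, hU⟩ := iInf_lt_iff.1 htop
    exact ⟨_, U, (iInf_lt_iff.1 hU).choose, rfl⟩
  obtain ⟨t, -, ht, hmem⟩ := exists_seq_tendsto_sInf hne (OrderBot.bddBelow _)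
  choose u hu hut using hmem
  rw [sInf_image] at ht
  exact ⟨u, hu, ht.congr fun n => (hut n).symm⟩

end Infimum

namespace H2

variable {N : ℕ} {σ R m e : ℝ} {V : ℕ → H2 N} {W : H2 N}

lemma WeakTendsto.massSq_pos (hVW : WeakTendsto V W) {A ε : ℝ} {x : Esp N} (hε : 0 < ε)
    (h : ∀ n, ε ≤ ‖lowFreq A (V n).toL2 x‖) : 0 < W.massSq := by
  have hlow : ε ≤ ‖lowFreq A W.toL2 x‖ := ge_of_tendsto' (hVW.toL2.tendsto_lowFreq A x).norm h
  refine W.massSq_nonneg.lt_of_ne' fun hzero => ?_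
  rw [massSq_eq, sq_eq_zero_iff, norm_eq_zero] at hzero
  rw [hzero, lowFreq_zero, norm_zero] at hlow
  exact hlow.not_gt hε

lemma neg_energy_add_massSq_mul_le_pPow (hσ : 0 < σ) (U : H2 N) :
    -(U.energy σ + U.massSq) * (σ + 1) ≤ U.pPow σ := by
  have hgrad := U.two_mul_gradSq_le one_pos
  rw [inv_one, one_mul, one_mul] at hgrad
  have hle : -(U.energy σ + U.massSq) ≤ U.pPow σ / (σ + 1) := by
    rw [energy, one_div_mul_eq_div]
    linarith
  exact (le_div_iff₀ (by linarith)).1 hle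

variable [NeZero N]

lemma exists_shift_weakTendsto_subseq (hσ : 0 < σ) (h : N * σ ≤ 4) {δ : ℝ} (hδ : 0 < δ)
    (hM : ∀ n, (V n).massSq ≤ R) (hL : ∀ n, (V n).lapSq ≤ R) (hp : ∀ n, δ ≤ (V n).pPow σ) :
    ∃ (φ : ℕ → ℕ) (xs : ℕ → Esp N) (W : H2 N), StrictMono φ ∧ 0 < W.massSq ∧
      WeakTendsto (fun n => (V (φ n)).shift (xs n)) W ∧
      ∀ᵐ x, Tendsto (fun n => ((V (φ n)).shift (xs n) - W).toL2 x) atTop (𝓝 0) := by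
  obtain ⟨A, ε, hε, hlow⟩ :=
    exists_le_norm_lowFreq (N := N) hσ h ((V 0).massSq_nonneg.trans (hM 0)) hδ
  choose xs hxs using fun n => hlow (V n) (hM n) (hL n) (hp n)
  obtain ⟨W, φ, hφ, hW, hae⟩ := exists_weakTendsto_tendsto_ae_subseq
    (V := fun n => (V n).shift (xs n)) (fun n => (massSq_shift _ _).trans_le (hM n))
    (fun n => (lapSq_shift _ _).trans_le (hL n))
  refine ⟨φ, xs ∘ φ, W, hφ, hW.massSq_pos (A := A) (x := 0) hε fun n => ?_, hW, hae⟩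
  simpa only [Function.comp_apply, toL2_shift, lowFreq_translateL2, zero_add] using hxs (φ n)

lemma exists_eventually_bounds (hσ : 0 < σ) (hm : 0 < m)
    (h : N * σ < 4 ∨ N * σ = 4 ∧ m < kstar N σ) (he : e < -m)
    (hmass : Tendsto (fun n => (V n).massSq) atTop (𝓝 m))
    (henergy : Tendsto (fun n => (V n).energy σ) atTop (𝓝 e)) :
    ∃ R, ∃ δ > 0, ∀ᶠ n in atTop, (V n).massSq ≤ R ∧ (V n).lapSq ≤ R ∧ δ ≤ (V n).pPow σ := by
  obtain ⟨a, ha, b, M, hmM, hcoer⟩ := exists_mul_lapSq_le_energy_add (N := N) hσ hm.le h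
  have hlt : e + m < (e + m) / 2 := by linarith
  refine ⟨max M ((e + 1 + b) / a), -((e + m) / 2) * (σ + 1),
    mul_pos (by linarith) (by linarith), ?_⟩
  filter_upwards [hmass.eventually_le_const hmM, henergy.eventually_le_const (lt_add_one e),
    (henergy.add hmass).eventually_le_const hlt] with n hM hE hsum
  refine ⟨le_max_of_le_left hM, le_max_of_le_right ?_, ?_⟩
  · rw [le_div_iff₀' ha]
    linarith [hcoer (V n) hM]
  · refine le_trans ?_ ((V n).neg_energy_add_massSq_mul_le_pPow hσ)
    gcongr

theorem exists_h2TendstoTrans_subseq (hσ : 0 < σ) (hm : 0 < m)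
    (h : N * σ < 4 ∨ N * σ = 4 ∧ m < kstar N σ) (he : e < -m)
    (hE : ∀ U : H2 N, U.massSq = m → e ≤ U.energy σ)
    (hmass : Tendsto (fun n => (V n).massSq) atTop (𝓝 m))
    (henergy : Tendsto (fun n => (V n).energy σ) atTop (𝓝 e)) :
    ∃ (ψ : ℕ → ℕ) (xs : ℕ → Esp N) (W : H2 N), StrictMono ψ ∧
      H2TendstoTrans (fun k => V (ψ k)) xs W ∧ W.massSq = m ∧ W.energy σ = e := by
  have h4 : N * σ ≤ 4 := h.elim le_of_lt fun hcrit => hcrit.1.le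
  obtain ⟨R, δ, hδ, hbound⟩ := exists_eventually_bounds hσ hm h he hmass henergy
  obtain ⟨τ, hτ, hbound⟩ := extraction_of_eventually_atTop hbound
  obtain ⟨φ, xs, W, hφ, hW, hweak, hae⟩ := exists_shift_weakTendsto_subseq hσ h4 hδ
    (fun n => (hbound n).1) (fun n => (hbound n).2.1) (fun n => (hbound n).2.2)
  have hψ := hτ.comp hφ
  have hM (n : ℕ) : ((V (τ (φ n))).shift (xs n)).massSq ≤ R :=
    (massSq_shift _ _).trans_le (hbound _).1
  have hL (n : ℕ) : ((V (τ (φ n))).shift (xs n)).lapSq ≤ R :=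
    (lapSq_shift _ _).trans_le (hbound _).2.1
  have hmass' : Tendsto (fun n => ((V (τ (φ n))).shift (xs n)).massSq) atTop (𝓝 m) := by
    simpa only [massSq_shift, Function.comp_def] using hmass.comp hψ.tendsto_atTop
  have henergy' : Tendsto (fun n => ((V (τ (φ n))).shift (xs n)).energy σ) atTop (𝓝 e) := by
    simpa only [energy_shift, Function.comp_def] using henergy.comp hψ.tendsto_atTop
  have hsplit := hweak.tendsto_energy_sub hσ h4 hM hL hae
  have hWm := hweak.massSq_eq_of_tendsto_energy hσ h4 hE hsplit hmass' henergy' hW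
  obtain ⟨hWe, hstrong⟩ := hweak.tendsto_h2NormSq_sub hσ h4 hL hsplit (hWm ▸ hmass') henergy'
    (hE W hWm)
  exact ⟨τ ∘ φ, xs, W, hψ, h2TendstoTrans_of_tendsto_h2NormSq hstrong, hWm, hWe⟩

lemma exists_le_energy (hσ : 0 < σ) (hm : 0 ≤ m)
    (h : N * σ < 4 ∨ N * σ = 4 ∧ m < kstar N σ) :
    ∃ b, ∀ U : H2 N, U.massSq = m → b ≤ U.energy σ := by
  obtain ⟨a, ha, b, M, hmM, hcoer⟩ := exists_mul_lapSq_le_energy_add (N := N) hσ hm h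
  refine ⟨-b, fun U hU => ?_⟩
  linarith [hcoer U (hU.trans_le hmM.le), mul_nonneg ha.le U.lapSq_nonneg]

end H2

/-- In the mass-subcritical case (or mass-critical below `k*`), if
`E_min(m) < -m` then every minimizing sequence is precompact in `H²` modulo translations,
and a minimizer exists. -/
theorem stmt9 (N : ℕ) (σ : ℝ) (hN : 1 ≤ N) (hσ : 0 < σ) (m : ℝ) (hm : 0 < m)
    (hcase : ((N : ℝ) * σ < 4 ∧ EminE N σ m < ((-m : ℝ) : EReal)) ∨
      ((N : ℝ) * σ = 4 ∧ m < kstar N σ ∧ EminE N σ m < ((-m : ℝ) : EReal))) :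
    (∀ u : ℕ → H2 N,
      Tendsto (fun n => (u n).massSq) atTop (nhds m) →
      Tendsto (fun n => (((u n).energy σ : ℝ) : EReal)) atTop (nhds (EminE N σ m)) →
      ∃ (ψ : ℕ → ℕ) (xs : ℕ → Esp N) (U : H2 N), StrictMono ψ ∧
        H2TendstoTrans (fun k => u (ψ k)) xs U ∧
        U.massSq = m ∧ ((U.energy σ : ℝ) : EReal) = EminE N σ m) ∧
    ∃ U : H2 N, U.massSq = m ∧ ((U.energy σ : ℝ) : EReal) = EminE N σ m := by
  have : NeZero N := ⟨Nat.one_le_iff_ne_zero.1 hN⟩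
  have hlt : EminE N σ m < ((-m : ℝ) : EReal) := hcase.elim And.right fun h => h.2.2
  have hc : N * σ < 4 ∨ N * σ = 4 ∧ m < kstar N σ := hcase.imp And.left fun h => ⟨h.1, h.2.1⟩
  obtain ⟨b, hb⟩ := H2.exists_le_energy hσ hm.le hc
  have htop : EminE N σ m < ⊤ := hlt.trans (EReal.coe_lt_top _)
  obtain ⟨e, he⟩ := exists_EminE_eq_coe hb htop
  obtain ⟨v, hvmass, hvenergy⟩ := exists_tendsto_EminE htop
  simp only [he, EReal.coe_lt_coe_iff, EReal.coe_eq_coe_iff, EReal.tendsto_coe] at hlt hvenergy ⊢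
  have hcompact (u : ℕ → H2 N) (hmass : Tendsto (fun n => (u n).massSq) atTop (𝓝 m))
      (henergy : Tendsto (fun n => (u n).energy σ) atTop (𝓝 e)) :=
    H2.exists_h2TendstoTrans_subseq hσ hm hc hlt (fun _ => le_energy_of_EminE_eq he) hmass henergy
  refine ⟨hcompact, ?_⟩
  obtain ⟨-, -, U, -, -, hU⟩ := hcompact v
    (by simpa only [hvmass] using tendsto_const_nhds) hvenergy
  exact ⟨U, hU⟩

end
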